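/- arXiv:1801.09072 — 7 statements merged into one kernel-verified Lean document; each statement's English description precedes it below -/
import Mathlib

section
/- Let V be a commutative quantale, F an endofunctor on the category of types, and Γ a V-relator for F. Then Γ ⊓ Γ°, the pointwise meet of Γ and its dual Γ°(α) := (Γ(α°))°, is the greatest conversive V-relator smaller than or equal to Γ: (i) Γ ⊓ Γ° is a V-relator for F and is conversive; (ii) Γ ⊓ Γ° ≤ Γ pointwise; (iii) every conversive V-relator Δ for F with Δ ≤ Γ satisfies Δ ≤ Γ ⊓ Γ°. -/
universe u v

/-- Composition of `V`-relations: `(β · α)(x, z) = ⨆ y, α x y * β y z`. -/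
def vcomp {V : Type v} [CompleteLattice V] [Mul V] {X Y Z : Type u}
    (β : Y → Z → V) (α : X → Y → V) : X → Z → V :=
  fun x z => ⨆ y, α x y * β y z

open Classical in
/-- The identity `V`-relation on `X`. -/
noncomputable def vid {V : Type v} [CompleteLattice V] [One V] (X : Type u) : X → X → V :=
  fun x x' => if x = x' then 1 else ⊥

/-- The dual of a `V`-relation. -/
def vdual {V : Type v} {X Y : Type u} (α : X → Y → V) : Y → X → V :=
  fun y x => α x y

open Classical in
/-- The graph of a function, as a `V`-relation. -/
noncomputable def vgraph {V : Type v} [CompleteLattice V] [One V] {X Y : Type u}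
    (f : X → Y) : X → Y → V :=
  fun x y => if y = f x then 1 else ⊥

/-- A `V`-relator for an endofunctor `T` (with functorial action `Tmap`): a lifting of
`V`-relations satisfying conditions (Vrel1)-(Vrel4). -/
structure IsVRelator (V : Type v) [CompleteLattice V] [CommMonoid V]
    (T : Type u → Type u) (Tmap : ∀ {X Y : Type u}, (X → Y) → T X → T Y)
    (Γ : ∀ {X Y : Type u}, (X → Y → V) → T X → T Y → V) : Prop where
  rel1 : ∀ X : Type u, vid (V := V) (T X) ≤ Γ (vid X)
  rel2 : ∀ {X Y Z : Type u} (α : X → Y → V) (β : Y → Z → V),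
      vcomp (Γ β) (Γ α) ≤ Γ (vcomp β α)
  rel3 : ∀ {X Y : Type u} (f : X → Y), vgraph (V := V) (Tmap f) ≤ Γ (vgraph f)
  rel3' : ∀ {X Y : Type u} (f : X → Y),
      vdual (vgraph (V := V) (Tmap f)) ≤ Γ (vdual (vgraph f))
  rel4 : ∀ {X Y : Type u} (α β : X → Y → V), α ≤ β → Γ α ≤ Γ β

/-- A `V`-relation lifting `Γ` is conversive if `Γ(α°) = (Γα)°`. -/
def Conversive (V : Type v)
    (T : Type u → Type u)
    (Γ : ∀ {X Y : Type u}, (X → Y → V) → T X → T Y → V) : Prop :=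
  ∀ {X Y : Type u} (α : X → Y → V), Γ (vdual α) = vdual (Γ α)

/-!
Transposition is a monotone involution on `V`-relations that fixes identities, reverses composites
and exchanges the two halves of (Vrel3), so `Γ°` is again a relator. Meets of relators are relators
since composition is monotone. `Γ ⊓ Γ°` is conversive because taking duals swaps its two factors,
and a conversive `Δ ≤ Γ` satisfies `Δ = Δ° ≤ Γ°`.
-/

section Relations

variable {V : Type v} {X Y Z : Type u}

theorem vdual_mono [LE V] {α β : X → Y → V} (h : α ≤ β) : vdual α ≤ vdual β :=
  fun y x => h x y

theorem vdual_vid [CompleteLattice V] [One V] (X : Type u) : vdual (vid (V := V) X) = vid X := by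
  funext x y
  classical exact if_congr eq_comm rfl rfl

theorem vdual_vcomp [CompleteLattice V] [CommMagma V] (α : X → Y → V) (β : Y → Z → V) :
    vdual (vcomp β α) = vcomp (vdual α) (vdual β) := by
  funext z x
  simp only [vdual, vcomp, mul_comm]

theorem vcomp_mono [CompleteLattice V] [Mul V] [MulLeftMono V] [MulRightMono V]
    {α α' : X → Y → V} {β β' : Y → Z → V} (hβ : β ≤ β') (hα : α ≤ α') :
    vcomp β α ≤ vcomp β' α' :=
  fun x z => iSup_mono fun y => mul_le_mul' (hα x y) (hβ y z)

end Relations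

section Liftings

variable {V : Type v} {F : Type u → Type u}
  {Fmap : ∀ {X Y : Type u}, (X → Y) → F X → F Y}
  {Γ Δ : ∀ {X Y : Type u}, (X → Y → V) → F X → F Y → V}

/-- The dual `Γ°` of a lifting `Γ` of `V`-relations, `Γ°(α) = (Γ(α°))°`. The relator `Γ ⊓ Γ°`
is the pointwise meet `fun α => Γ α ⊓ dualLifting Γ α`. -/
def dualLifting (Γ : ∀ {X Y : Type u}, (X → Y → V) → F X → F Y → V) {X Y : Type u}
    (α : X → Y → V) : F X → F Y → V :=
  vdual (Γ (vdual α))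

namespace IsVRelator

variable [CompleteLattice V] [CommMonoid V]

protected theorem dualLifting (hΓ : IsVRelator V F Fmap Γ) :
    IsVRelator V F Fmap (dualLifting Γ) where
  rel1 X := calc
    vid (F X) = vdual (vid (F X)) := (vdual_vid (F X)).symm
    _ ≤ vdual (Γ (vid X)) := vdual_mono (hΓ.rel1 X)
    _ = dualLifting Γ (vid X) := by rw [dualLifting, vdual_vid]
  rel2 α β := calc
    vcomp (dualLifting Γ β) (dualLifting Γ α)
      = vdual (vcomp (Γ (vdual α)) (Γ (vdual β))) := (vdual_vcomp _ _).symm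
    _ ≤ vdual (Γ (vcomp (vdual α) (vdual β))) := vdual_mono (hΓ.rel2 (vdual β) (vdual α))
    _ = dualLifting Γ (vcomp β α) := by rw [dualLifting, vdual_vcomp]
  rel3 f := vdual_mono (hΓ.rel3' f)
  rel3' f := vdual_mono (hΓ.rel3 f)
  rel4 α β h := vdual_mono (hΓ.rel4 (vdual α) (vdual β) (vdual_mono h))

protected theorem inf [MulLeftMono V] (hΓ : IsVRelator V F Fmap Γ) (hΔ : IsVRelator V F Fmap Δ) :
    IsVRelator V F Fmap (fun α => Γ α ⊓ Δ α) where
  rel1 X := le_inf (hΓ.rel1 X) (hΔ.rel1 X)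
  rel2 α β := le_inf
    ((vcomp_mono inf_le_left inf_le_left).trans (hΓ.rel2 α β))
    ((vcomp_mono inf_le_right inf_le_right).trans (hΔ.rel2 α β))
  rel3 f := le_inf (hΓ.rel3 f) (hΔ.rel3 f)
  rel3' f := le_inf (hΓ.rel3' f) (hΔ.rel3' f)
  rel4 α β h := inf_le_inf (hΓ.rel4 α β h) (hΔ.rel4 α β h)

end IsVRelator

theorem conversive_inf_dualLifting [SemilatticeInf V]
    (Γ : ∀ {X Y : Type u}, (X → Y → V) → F X → F Y → V) :
    Conversive V F (fun α => Γ α ⊓ dualLifting Γ α) :=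
  fun α => inf_comm (Γ (vdual α)) (vdual (Γ α))

theorem dualLifting_mono [LE V] (h : ∀ {X Y : Type u} (α : X → Y → V), Δ α ≤ Γ α)
    {X Y : Type u} (α : X → Y → V) : dualLifting Δ α ≤ dualLifting Γ α :=
  vdual_mono (h (vdual α))

namespace Conversive

theorem dualLifting_eq (hΔ : Conversive V F Δ) {X Y : Type u} (α : X → Y → V) :
    dualLifting Δ α = Δ α :=
  congrArg vdual (hΔ α)

theorem le_inf_dualLifting [SemilatticeInf V] (hΔ : Conversive V F Δ)
    (h : ∀ {X Y : Type u} (α : X → Y → V), Δ α ≤ Γ α) {X Y : Type u} (α : X → Y → V) :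
    Δ α ≤ Γ α ⊓ dualLifting Γ α :=
  le_inf (h α) ((hΔ.dualLifting_eq α).ge.trans (dualLifting_mono h α))

end Conversive

end Liftings

theorem vrelator_meet_dual_greatest_conversive_general
    {V : Type v} [CompleteLattice V] [CommMonoid V] [MulLeftMono V]
    {F : Type u → Type u}
    {Fmap : ∀ {X Y : Type u}, (X → Y) → F X → F Y}
    {Γ : ∀ {X Y : Type u}, (X → Y → V) → F X → F Y → V}
    (hΓ : IsVRelator V F Fmap Γ) :
    (IsVRelator V F Fmap (fun α => Γ α ⊓ dualLifting Γ α) ∧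
      Conversive V F (fun α => Γ α ⊓ dualLifting Γ α)) ∧
    (∀ {X Y : Type u} (α : X → Y → V), Γ α ⊓ dualLifting Γ α ≤ Γ α) ∧
    (∀ Δ : ∀ {X Y : Type u}, (X → Y → V) → F X → F Y → V,
      Conversive V F Δ →
      (∀ {X Y : Type u} (α : X → Y → V), Δ α ≤ Γ α) →
      ∀ {X Y : Type u} (α : X → Y → V), Δ α ≤ Γ α ⊓ dualLifting Γ α) :=
  ⟨⟨hΓ.inf hΓ.dualLifting, conversive_inf_dualLifting Γ⟩,
    fun _ => inf_le_left,
    fun _ hΔ hle => hΔ.le_inf_dualLifting hle⟩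

/-- `Γ ⊓ Γ°` is the greatest conversive `V`-relator smaller than or
equal to `Γ`. -/
theorem vrelator_meet_dual_greatest_conversive
    {V : Type v} [CompleteLattice V] [CommMonoid V] [IsQuantale V]
    (F : Type u → Type u)
    (Fmap : ∀ {X Y : Type u}, (X → Y) → F X → F Y)
    (Γ : ∀ {X Y : Type u}, (X → Y → V) → F X → F Y → V)
    (hΓ : IsVRelator V F (fun f => Fmap f) (fun α => Γ α)) :
    (IsVRelator V F (fun f => Fmap f) (fun α t s => Γ α t s ⊓ Γ (vdual α) s t) ∧
      Conversive V F (fun α t s => Γ α t s ⊓ Γ (vdual α) s t)) ∧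
    (∀ {X Y : Type u} (α : X → Y → V) (t : F X) (s : F Y),
      Γ α t s ⊓ Γ (vdual α) s t ≤ Γ α t s) ∧
    (∀ Δ : ∀ {X Y : Type u}, (X → Y → V) → F X → F Y → V,
      IsVRelator V F (fun f => Fmap f) (fun α => Δ α) →
      Conversive V F (fun α => Δ α) →
      (∀ {X Y : Type u} (α : X → Y → V), Δ α ≤ Γ α) →
      ∀ {X Y : Type u} (α : X → Y → V) (t : F X) (s : F Y),
        Δ α t s ≤ Γ α t s ⊓ Γ (vdual α) s t) := by
  obtain ⟨hrel, hle, hgreatest⟩ := vrelator_meet_dual_greatest_conversive_general hΓ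
  exact ⟨hrel, hle, fun Δ _ hΔ hΔΓ => hgreatest Δ hΔ hΔΓ⟩
end

section
/- Let X and Y be countable types, μ a probability mass function (PMF) on X, ν a PMF on Y, and α : X → Y → ℝ with 0 ≤ α(x,y) ≤ 1 for all x, y. Then: (i) the infimum defining Wα(μ,ν) is attained, i.e. there exists a coupling ω ∈ Ω(μ,ν) with ∑_{x,y} α(x,y) · ω(x,y) = Wα(μ,ν); (ii) Wα(μ,ν) equals the supremum, over all families of real numbers (a_x)_{x ∈ X} and (b_y)_{y ∈ Y} that are bounded above, satisfy a_x + b_y ≤ α(x,y) for all x, y, and for which the series ∑_x a_x · μ(x) and ∑_y b_y · ν(y) are summable, of the value ∑_x a_x · μ(x) + ∑_y b_y · ν(y); and (iii) this supremum is attained by some such family. -/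
open scoped ENNReal

/-- `ω` is a coupling of `μ` and `ν`: a joint distribution with marginals `μ` and `ν`. -/
def IsCoupling {X Y : Type*} (μ : PMF X) (ν : PMF Y) (ω : PMF (X × Y)) : Prop :=
  (∀ x, ∑' y, ω (x, y) = μ x) ∧ ∀ y, ∑' x, ω (x, y) = ν y

/-- The transport cost `∑_{x,y} α(x,y) · ω(x,y)` of a joint distribution `ω`. -/
noncomputable def Wcost {X Y : Type*} (α : X → Y → ℝ) (ω : PMF (X × Y)) : ℝ :=
  ∑' p : X × Y, α p.1 p.2 * (ω p).toReal

/-- The Wasserstein lifting `W α(μ, ν) = inf { Wcost α ω | ω coupling of μ, ν }`. -/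
noncomputable def Wass {X Y : Type*} (α : X → Y → ℝ) (μ : PMF X) (ν : PMF Y) : ℝ :=
  sInf (Wcost α '' {ω | IsCoupling μ ν ω})

/-!
Couplings form a compact set on which the cost is continuous, so an optimal one exists. Rerouting
finitely much mass along a perturbation that leaves the marginals unchanged and is nonnegative off
the support cannot lower its cost. Fix `x₀` in the first projection of the support, and let `a x` be
the infimal cost of a perturbation that moves one unit of first marginal from `x₀` to `x`. Closing
such a perturbation up to a balanced one bounds `a x` from below, and extending it by one step shows
that `a` and its transform `b y = inf_x (α x y - a x)` satisfy `a x + b y = α x y` on the support.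
By complementary slackness the coupling and the pair `(a, b)` have the same value, and weak duality
makes both optimal.
-/

section Sums

variable {ι κ : Type*}

lemma hasSum_toReal_of_tsum_eq {f : ι → ℝ≥0∞} {s : ℝ≥0∞} (hf : ∑' i, f i = s) (hs : s ≠ ∞) :
    HasSum (fun i => (f i).toReal) s.toReal := by
  subst hf
  rw [ENNReal.tsum_toReal_eq (ENNReal.ne_top_of_tsum_ne_top hs)]
  exact ENNReal.hasSum_toReal hs

lemma hasSum_mul_linearCombination (c : ι → ℝ) (d : ι →₀ ℝ) :
    HasSum (fun i => c i * d i) (Finsupp.linearCombination ℝ c d) := by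
  have hsum : Finsupp.linearCombination ℝ c d = ∑ i ∈ d.support, c i * d i := by
    simp only [Finsupp.linearCombination_apply, Finsupp.sum, smul_eq_mul, mul_comm]
  rw [hsum]
  refine hasSum_sum_of_ne_finset_zero fun i hi => ?_
  rw [Finsupp.notMem_support_iff.1 hi, mul_zero]

lemma summable_mul_of_abs_le {m a : ι → ℝ} {K : ℝ} (hm : Summable m) (hm0 : ∀ i, 0 ≤ m i)
    (ha : ∀ i, |a i| ≤ K) : Summable fun i => a i * m i := by
  refine Summable.of_norm_bounded (hm.mul_left K) fun i => ?_
  rw [norm_mul, Real.norm_eq_abs, Real.norm_of_nonneg (hm0 i)]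
  exact mul_le_mul_of_nonneg_right (ha i) (hm0 i)

lemma continuousOn_tsum_mul_comp_Icc {c : κ → ℝ} {C : ℝ} (hc : ∀ k, |c k| ≤ C) {u : ι → ℝ}
    {e : κ → ι} {v : κ → ℝ} (hv : Summable v) (huv : ∀ k, u (e k) ≤ v k) :
    ContinuousOn (fun w : ι → ℝ => ∑' k, c k * w (e k)) (Set.Icc 0 u) := by
  refine continuousOn_tsum (fun k => by fun_prop) (hv.mul_left C) fun k w hw => ?_
  rw [norm_mul, Real.norm_eq_abs, Real.norm_of_nonneg (hw.1 (e k))]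
  exact mul_le_mul (hc k) ((hw.2 (e k)).trans (huv k)) (hw.1 (e k)) ((abs_nonneg _).trans (hc k))

lemma exists_pos_forall_nonneg_add_mul {w : ι → ℝ} (hw : ∀ i, 0 ≤ w i) (d : ι →₀ ℝ)
    (hd : ∀ i, w i = 0 → 0 ≤ d i) : ∃ ε : ℝ, 0 < ε ∧ ∀ i, 0 ≤ w i + ε * d i := by
  have heventually : ∀ᶠ ε in nhdsWithin (0 : ℝ) (Set.Ioi 0),
      ∀ i ∈ d.support, 0 ≤ w i + ε * d i := by
    rw [Filter.eventually_all_finset]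
    intro i _
    rcases (hw i).eq_or_lt with hzero | hpos
    · filter_upwards [self_mem_nhdsWithin] with ε hε
      rw [← hzero, zero_add]
      exact mul_nonneg (le_of_lt hε) (hd i hzero.symm)
    · have hcont : Continuous fun ε : ℝ => w i + ε * d i := by fun_prop
      have hnear : ∀ᶠ ε in nhds (0 : ℝ), 0 < w i + ε * d i :=
        hcont.continuousAt.eventually (lt_mem_nhds (by simpa using hpos))
      exact (hnear.filter_mono nhdsWithin_le_nhds).mono fun _ h => h.le
  obtain ⟨ε, hsupport, hε⟩ := (heventually.and self_mem_nhdsWithin).exists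
  refine ⟨ε, hε, fun i => ?_⟩
  by_cases hi : i ∈ d.support
  · exact hsupport i hi
  · simpa [Finsupp.notMem_support_iff.1 hi] using hw i

end Sums

section Transport

variable {X Y : Type*}

/-- `w` is a transport plan from `m` to `n`: the real-valued counterpart of `IsCoupling`, in which
`m` and `n` need not have total mass one. -/
structure IsTransportPlan (m : X → ℝ) (n : Y → ℝ) (w : X × Y → ℝ) : Prop where
  nonneg : ∀ p, 0 ≤ w p
  hasSum_row : ∀ x, HasSum (fun y => w (x, y)) (m x)
  hasSum_col : ∀ y, HasSum (fun x => w (x, y)) (n y)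

namespace IsTransportPlan

variable {m : X → ℝ} {n : Y → ℝ} {w : X × Y → ℝ} {α : X → Y → ℝ} {C : ℝ}

lemma of_mul (hm0 : ∀ x, 0 ≤ m x) (hn0 : ∀ y, 0 ≤ n y) (hm : HasSum m 1) (hn : HasSum n 1) :
    IsTransportPlan m n fun p => m p.1 * n p.2 where
  nonneg p := mul_nonneg (hm0 p.1) (hn0 p.2)
  hasSum_row x := by simpa using hn.mul_left (m x)
  hasSum_col y := by simpa using hm.mul_right (n y)

lemma swap (h : IsTransportPlan m n w) : IsTransportPlan n m fun p => w p.swap :=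
  ⟨fun p => h.nonneg p.swap, h.hasSum_col, h.hasSum_row⟩

lemma fst_nonneg (h : IsTransportPlan m n w) (x : X) : 0 ≤ m x :=
  (h.hasSum_row x).nonneg fun _ => h.nonneg _

lemma le_fst (h : IsTransportPlan m n w) (p : X × Y) : w p ≤ m p.1 :=
  le_hasSum (h.hasSum_row p.1) p.2 fun _ _ => h.nonneg _

lemma le_snd (h : IsTransportPlan m n w) (p : X × Y) : w p ≤ n p.2 :=
  h.swap.le_fst p.swap

lemma summable_fst_mul (h : IsTransportPlan m n w) {a : X → ℝ}
    (ha : Summable fun x => a x * m x) : Summable fun p : X × Y => a p.1 * w p := by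
  have habs_row (x : X) : HasSum (fun y => |a x * w (x, y)|) |a x * m x| := by
    simpa only [abs_mul, abs_of_nonneg (h.nonneg _), abs_of_nonneg (h.fst_nonneg x)]
      using (h.hasSum_row x).mul_left |a x|
  rw [← summable_abs_iff, summable_prod_of_nonneg fun _ => abs_nonneg _]
  refine ⟨fun x => (habs_row x).summable, ?_⟩
  simpa only [(habs_row _).tsum_eq] using ha.abs

lemma hasSum_fst_mul (h : IsTransportPlan m n w) {a : X → ℝ}
    (ha : Summable fun x => a x * m x) :
    HasSum (fun p : X × Y => a p.1 * w p) (∑' x, a x * m x) := by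
  have hsum := (h.summable_fst_mul ha).hasSum
  have hrows := hsum.prod_fiberwise fun x => (h.hasSum_row x).mul_left (a x)
  rwa [hrows.tsum_eq]

lemma hasSum_snd_mul (h : IsTransportPlan m n w) {b : Y → ℝ}
    (hb : Summable fun y => b y * n y) :
    HasSum (fun p : X × Y => b p.2 * w p) (∑' y, b y * n y) :=
  (Equiv.prodComm X Y).symm.hasSum_iff.1 (h.swap.hasSum_fst_mul hb)

lemma summable_cost (h : IsTransportPlan m n w) (hm : Summable m) (hα : ∀ x y, |α x y| ≤ C) :
    Summable fun p : X × Y => α p.1 p.2 * w p := by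
  have hw : Summable w := by
    simpa using h.summable_fst_mul (a := fun _ => 1) (by simpa using hm)
  exact summable_mul_of_abs_le hw h.nonneg fun p => hα p.1 p.2

theorem dual_le_cost (h : IsTransportPlan m n w) (hm : Summable m) (hα : ∀ x y, |α x y| ≤ C)
    {a : X → ℝ} {b : Y → ℝ} (ha : Summable fun x => a x * m x)
    (hb : Summable fun y => b y * n y) (hab : ∀ x y, a x + b y ≤ α x y) :
    (∑' x, a x * m x) + ∑' y, b y * n y ≤ ∑' p : X × Y, α p.1 p.2 * w p := by
  refine hasSum_le (fun p => ?_) ((h.hasSum_fst_mul ha).add (h.hasSum_snd_mul hb))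
    (h.summable_cost hm hα).hasSum
  rw [← add_mul]
  exact mul_le_mul_of_nonneg_right (hab p.1 p.2) (h.nonneg p)

theorem cost_eq_dual_of_eqOn_support (h : IsTransportPlan m n w)
    {a : X → ℝ} {b : Y → ℝ} (ha : Summable fun x => a x * m x)
    (hb : Summable fun y => b y * n y)
    (hab : ∀ x y, (x, y) ∈ Function.support w → a x + b y = α x y) :
    ∑' p : X × Y, α p.1 p.2 * w p = (∑' x, a x * m x) + ∑' y, b y * n y := by
  rw [← ((h.hasSum_fst_mul ha).add (h.hasSum_snd_mul hb)).tsum_eq]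
  refine tsum_congr fun p => ?_
  by_cases hp : w p = 0
  · simp [hp]
  · rw [← hab p.1 p.2 hp, add_mul]

lemma mem_Icc (h : IsTransportPlan m n w) :
    w ∈ Set.Icc 0 fun p : X × Y => min (m p.1) (n p.2) :=
  ⟨h.nonneg, fun p => le_min (h.le_fst p) (h.le_snd p)⟩

end IsTransportPlan

section Existence

variable {m : X → ℝ} {n : Y → ℝ} {α : X → Y → ℝ} {C : ℝ}

lemma isTransportPlan_iff_mem_Icc (hm : Summable m) (hn : Summable n) {w : X × Y → ℝ} :
    IsTransportPlan m n w ↔ w ∈ Set.Icc 0 (fun p : X × Y => min (m p.1) (n p.2)) ∧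
      (fun x => ∑' y, w (x, y), fun y => ∑' x, w (x, y)) = (m, n) := by
  constructor
  · intro h
    exact ⟨h.mem_Icc, Prod.ext (funext fun x => (h.hasSum_row x).tsum_eq)
      (funext fun y => (h.hasSum_col y).tsum_eq)⟩
  · rintro ⟨⟨hnonneg, hle⟩, hmarginals⟩
    obtain ⟨rfl, rfl⟩ := Prod.mk.inj hmarginals
    refine ⟨hnonneg, fun x => ?_, fun y => ?_⟩
    · exact (Summable.of_nonneg_of_le (fun y => hnonneg (x, y))
        (fun y => (hle (x, y)).trans (min_le_right _ _)) hn).hasSum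
    · exact (Summable.of_nonneg_of_le (fun x => hnonneg (x, y))
        (fun x => (hle (x, y)).trans (min_le_left _ _)) hm).hasSum

theorem isCompact_setOf_isTransportPlan (hm : Summable m) (hn : Summable n) :
    IsCompact {w | IsTransportPlan m n w} := by
  have hmarginals : ContinuousOn
      (fun w : X × Y → ℝ => (fun x => ∑' y, w (x, y), fun y => ∑' x, w (x, y)))
      (Set.Icc 0 fun p : X × Y => min (m p.1) (n p.2)) := by
    refine (continuousOn_pi.2 fun x => ?_).prodMk (continuousOn_pi.2 fun y => ?_)
    · simpa only [one_mul] using continuousOn_tsum_mul_comp_Icc (c := fun _ => 1)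
        (fun _ => abs_one.le) (e := fun y => (x, y)) hn fun _ => min_le_right _ _
    · simpa only [one_mul] using continuousOn_tsum_mul_comp_Icc (c := fun _ => 1)
        (fun _ => abs_one.le) (e := fun x => (x, y)) hm fun _ => min_le_left _ _
  convert isCompact_Icc.of_isClosed_subset
    (hmarginals.preimage_isClosed_of_isClosed isClosed_Icc (isClosed_singleton (x := (m, n))))
    Set.inter_subset_left using 1
  exact Set.ext fun w => isTransportPlan_iff_mem_Icc hm hn

-- `min (m x) (n y)` need not be summable over `X × Y`, so domination is applied to one index at a
-- time.
lemma continuousOn_iterated_cost (hm : Summable m) (hn : Summable n)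
    (hα : ∀ x y, |α x y| ≤ C) :
    ContinuousOn (fun w : X × Y → ℝ => ∑' x, ∑' y, α x y * w (x, y))
      {w | IsTransportPlan m n w} := by
  refine continuousOn_tsum (fun x => ?_) (hm.mul_left C) fun x w hw => ?_
  · exact (continuousOn_tsum_mul_comp_Icc (hα x) (e := fun y => (x, y)) hn
      fun _ => min_le_right _ _).mono fun w hw => hw.mem_Icc
  · refine tsum_of_norm_bounded ((hw.hasSum_row x).mul_left C) fun y => ?_
    rw [norm_mul, Real.norm_eq_abs, Real.norm_of_nonneg (hw.nonneg _)]
    exact mul_le_mul_of_nonneg_right (hα x y) (hw.nonneg _)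

theorem exists_isMinOn_cost (hm : Summable m) (hn : Summable n) (hα : ∀ x y, |α x y| ≤ C)
    (hne : ∃ w, IsTransportPlan m n w) :
    ∃ w, IsTransportPlan m n w ∧
      IsMinOn (fun w => ∑' p : X × Y, α p.1 p.2 * w p) {w | IsTransportPlan m n w} w := by
  obtain ⟨w, hw, hmin⟩ := (isCompact_setOf_isTransportPlan hm hn).exists_isMinOn hne
    (continuousOn_iterated_cost hm hn hα)
  refine ⟨w, hw, fun w' hw' => ?_⟩
  have hle := hmin hw'
  simp only [Set.mem_ofPred_eq] at hw' hle ⊢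
  rwa [(hw.summable_cost hm hα).tsum_prod, (hw'.summable_cost hm hα).tsum_prod]

end Existence

/-- `d` is a finite perturbation of a transport plan with support `S`: it removes mass only on `S`,
changes the first marginal by `σ`, and keeps the second marginal. -/
structure IsRerouting (S : Set (X × Y)) (σ : X →₀ ℝ) (d : X × Y →₀ ℝ) : Prop where
  nonneg_of_notMem : ∀ p ∉ S, 0 ≤ d p
  hasSum_row : ∀ x, HasSum (fun y => d (x, y)) (σ x)
  hasSum_col : ∀ y, HasSum (fun x => d (x, y)) 0

/-- The change in transport cost caused by a finite perturbation. -/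
noncomputable def perturbationCost (α : X → Y → ℝ) : (X × Y →₀ ℝ) →ₗ[ℝ] ℝ :=
  Finsupp.linearCombination ℝ (Function.uncurry α)

/-- No finite perturbation that removes mass only on `S` and keeps both marginals lowers the cost:
the linear form of cyclical monotonicity of `S`, stated without reference to cycles. -/
def IsFinitelyOptimal (α : X → Y → ℝ) (S : Set (X × Y)) : Prop :=
  ∀ d, IsRerouting S 0 d → 0 ≤ perturbationCost α d

/-- The elementary perturbation moving a unit of mass from `(x, y)` to `(x', y)`. -/
noncomputable def unitRerouting (x x' : X) (y : Y) : X × Y →₀ ℝ :=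
  Finsupp.single (x', y) 1 - Finsupp.single (x, y) 1

/-- The infimal cost of moving a unit of first marginal from `x₀` to `x` by finite perturbations.
It is meaningful only for `x` in the first projection of `S`; elsewhere the set of costs may be
unbounded below, and the value is then `0`. -/
noncomputable def reroutingCost (α : X → Y → ℝ) (S : Set (X × Y)) (x₀ x : X) : ℝ :=
  sInf (perturbationCost α ''
    {d | IsRerouting S (Finsupp.single x 1 - Finsupp.single x₀ 1) d})

section Rerouting

variable {α : X → Y → ℝ} {S : Set (X × Y)} {C : ℝ} {x₀ x x' : X} {y₀ y y' : Y}

lemma IsRerouting.add {σ τ : X →₀ ℝ} {d e : X × Y →₀ ℝ} (hd : IsRerouting S σ d)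
    (he : IsRerouting S τ e) : IsRerouting S (σ + τ) (d + e) where
  nonneg_of_notMem p hp := add_nonneg (hd.nonneg_of_notMem p hp) (he.nonneg_of_notMem p hp)
  hasSum_row x := (hd.hasSum_row x).add (he.hasSum_row x)
  hasSum_col y := by simpa using (hd.hasSum_col y).add (he.hasSum_col y)

lemma hasSum_row_single (p : X × Y) (r : ℝ) (x : X) :
    HasSum (fun y => Finsupp.single p r (x, y)) (Finsupp.single p.1 r x) := by
  classical
  convert hasSum_single (f := fun y => Finsupp.single p r (x, y)) p.2 fun y hy => ?_ using 1
  · simp [Finsupp.single_apply, Prod.ext_iff]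
  · exact Finsupp.single_eq_of_ne fun h => hy (congrArg Prod.snd h)

lemma hasSum_col_single (p : X × Y) (r : ℝ) (y : Y) :
    HasSum (fun x => Finsupp.single p r (x, y)) (Finsupp.single p.2 r y) := by
  classical
  convert hasSum_single (f := fun x => Finsupp.single p r (x, y)) p.1 fun x hx => ?_ using 1
  · simp [Finsupp.single_apply, Prod.ext_iff]
  · exact Finsupp.single_eq_of_ne fun h => hx (congrArg Prod.fst h)

lemma isRerouting_unitRerouting (hxy : (x, y) ∈ S) (x' : X) :
    IsRerouting S (Finsupp.single x' 1 - Finsupp.single x 1) (unitRerouting x x' y) where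
  nonneg_of_notMem p hp := by
    have hne : p ≠ (x, y) := fun h => hp (h ▸ hxy)
    have hsingle : (0 : X × Y →₀ ℝ) ≤ Finsupp.single (x', y) 1 :=
      Finsupp.single_nonneg.2 zero_le_one
    simpa [unitRerouting, Finsupp.single_eq_of_ne hne] using hsingle p
  hasSum_row u := (hasSum_row_single (x', y) 1 u).sub (hasSum_row_single (x, y) 1 u)
  hasSum_col v := by
    simpa [unitRerouting] using (hasSum_col_single (x', y) 1 v).sub (hasSum_col_single (x, y) 1 v)

lemma IsRerouting.add_unitRerouting {d : X × Y →₀ ℝ}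
    (hd : IsRerouting S (Finsupp.single x 1 - Finsupp.single x₀ 1) d) (hxy : (x, y) ∈ S)
    (x' : X) :
    IsRerouting S (Finsupp.single x' 1 - Finsupp.single x₀ 1) (d + unitRerouting x x' y) := by
  simpa only [sub_add_sub_cancel'] using hd.add (isRerouting_unitRerouting hxy x')

lemma perturbationCost_unitRerouting (α : X → Y → ℝ) (x x' : X) (y : Y) :
    perturbationCost α (unitRerouting x x' y) = α x' y - α x y := by
  simp [perturbationCost, unitRerouting]

lemma neg_two_mul_le_perturbationCost (hS : IsFinitelyOptimal α S) (hα : ∀ x y, |α x y| ≤ C)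
    (hxy : (x, y) ∈ S) {d : X × Y →₀ ℝ}
    (hd : IsRerouting S (Finsupp.single x 1 - Finsupp.single x₀ 1) d) :
    -(2 * C) ≤ perturbationCost α d := by
  have hclosed : IsRerouting S 0 (d + unitRerouting x x₀ y) := by
    simpa only [sub_self] using hd.add_unitRerouting hxy x₀
  have hnonneg := hS _ hclosed
  rw [map_add, perturbationCost_unitRerouting] at hnonneg
  linarith [(abs_le.1 (hα x y)).1, (abs_le.1 (hα x₀ y)).2]

lemma reroutingCost_le (hS : IsFinitelyOptimal α S) (hα : ∀ x y, |α x y| ≤ C)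
    (hxy : (x, y) ∈ S) {d : X × Y →₀ ℝ}
    (hd : IsRerouting S (Finsupp.single x 1 - Finsupp.single x₀ 1) d) :
    reroutingCost α S x₀ x ≤ perturbationCost α d := by
  refine csInf_le ⟨-(2 * C), ?_⟩ ⟨d, hd, rfl⟩
  rintro _ ⟨e, he, rfl⟩
  exact neg_two_mul_le_perturbationCost hS hα hxy he

lemma le_reroutingCost (h₀ : (x₀, y₀) ∈ S) {r : ℝ}
    (hr : ∀ d, IsRerouting S (Finsupp.single x 1 - Finsupp.single x₀ 1) d →
      r ≤ perturbationCost α d) : r ≤ reroutingCost α S x₀ x := by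
  refine le_csInf ⟨_, _, isRerouting_unitRerouting h₀ x, rfl⟩ ?_
  rintro _ ⟨d, hd, rfl⟩
  exact hr d hd

lemma abs_reroutingCost_le (hS : IsFinitelyOptimal α S) (hα : ∀ x y, |α x y| ≤ C)
    (h₀ : (x₀, y₀) ∈ S) (hxy : (x, y) ∈ S) : |reroutingCost α S x₀ x| ≤ 2 * C := by
  refine abs_le.2 ⟨le_reroutingCost h₀ fun d hd =>
    neg_two_mul_le_perturbationCost hS hα hxy hd, ?_⟩
  have hle := reroutingCost_le hS hα hxy (isRerouting_unitRerouting h₀ x)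
  rw [perturbationCost_unitRerouting] at hle
  linarith [(abs_le.1 (hα x y₀)).2, (abs_le.1 (hα x₀ y₀)).1]

lemma sub_reroutingCost_le (hS : IsFinitelyOptimal α S) (hα : ∀ x y, |α x y| ≤ C)
    (h₀ : (x₀, y₀) ∈ S) (hxy : (x, y) ∈ S) (hxy' : (x', y') ∈ S) :
    α x y - reroutingCost α S x₀ x ≤ α x' y - reroutingCost α S x₀ x' := by
  suffices reroutingCost α S x₀ x' - (α x' y - α x y) ≤ reroutingCost α S x₀ x by linarith
  refine le_reroutingCost h₀ fun d hd => ?_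
  have hle := reroutingCost_le hS hα hxy' (hd.add_unitRerouting hxy x')
  rw [map_add, perturbationCost_unitRerouting] at hle
  linarith

end Rerouting

/-- The transform `y ↦ inf_x (α x y - a x)`, the largest `b` with `a x + b y ≤ α x y`. The infimum
is a genuine one when `α` and `a` are bounded and `X` is nonempty. -/
noncomputable def costTransform (α : X → Y → ℝ) (a : X → ℝ) (y : Y) : ℝ :=
  ⨅ x, (α x y - a x)

section Potentials

variable {α : X → Y → ℝ} {S : Set (X × Y)} {a : X → ℝ} {C K : ℝ}

lemma abs_sub_le_of_abs_le (hα : ∀ x y, |α x y| ≤ C) (ha : ∀ x, |a x| ≤ K) (x : X) (y : Y) :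
    |α x y - a x| ≤ C + K :=
  (abs_sub _ _).trans (add_le_add (hα x y) (ha x))

lemma costTransform_le (hα : ∀ x y, |α x y| ≤ C) (ha : ∀ x, |a x| ≤ K) (x : X) (y : Y) :
    costTransform α a y ≤ α x y - a x := by
  refine ciInf_le ⟨-(C + K), ?_⟩ x
  rintro _ ⟨u, rfl⟩
  exact (abs_le.1 (abs_sub_le_of_abs_le hα ha u y)).1

lemma abs_costTransform_le [Nonempty X] (hα : ∀ x y, |α x y| ≤ C) (ha : ∀ x, |a x| ≤ K)
    (y : Y) : |costTransform α a y| ≤ C + K := by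
  have x : X := Classical.arbitrary X
  refine abs_le.2 ⟨le_ciInf fun u => (abs_le.1 (abs_sub_le_of_abs_le hα ha u y)).1, ?_⟩
  exact (costTransform_le hα ha x y).trans (abs_le.1 (abs_sub_le_of_abs_le hα ha x y)).2

lemma exists_bounded_forall_sub_le (hS : IsFinitelyOptimal α S) (hα : ∀ x y, |α x y| ≤ C)
    (hne : S.Nonempty) :
    ∃ a : X → ℝ, (∀ x, |a x| ≤ 4 * C) ∧
      ∀ x y x', (x, y) ∈ S → α x y - a x ≤ α x' y - a x' := by
  classical
  obtain ⟨⟨x₀, y₀⟩, h₀⟩ := hne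
  have hC : 0 ≤ C := (abs_nonneg _).trans (hα x₀ y₀)
  -- Off the projection of `S` the potential only has to be small enough: `-4C` lies at
  -- least `2C` below every value of `reroutingCost` on the projection, and
  -- `α` oscillates by at most `2C`.
  refine ⟨fun x => if x ∈ Prod.fst '' S then reroutingCost α S x₀ x else -(4 * C),
    fun x => ?_, fun x y x' hxy => ?_⟩
  · beta_reduce
    split_ifs with hx
    · obtain ⟨⟨x, y⟩, hxy, rfl⟩ := hx
      linarith [abs_reroutingCost_le hS hα h₀ hxy]
    · rw [abs_neg, abs_of_nonneg (by positivity)]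
  · beta_reduce
    rw [if_pos ⟨(x, y), hxy, rfl⟩]
    split_ifs with hx'
    · obtain ⟨⟨x', y'⟩, hxy', rfl⟩ := hx'
      exact sub_reroutingCost_le hS hα h₀ hxy hxy'
    · linarith [(abs_le.1 (abs_reroutingCost_le hS hα h₀ hxy)).1, (abs_le.1 (hα x y)).2,
        (abs_le.1 (hα x' y)).1]

theorem exists_bounded_potentials (hS : IsFinitelyOptimal α S) (hα : ∀ x y, |α x y| ≤ C) :
    ∃ (a : X → ℝ) (b : Y → ℝ) (K : ℝ), (∀ x, |a x| ≤ K) ∧ (∀ y, |b y| ≤ K) ∧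
      (∀ x y, a x + b y ≤ α x y) ∧ ∀ x y, (x, y) ∈ S → a x + b y = α x y := by
  rcases S.eq_empty_or_nonempty with rfl | hne
  · refine ⟨0, fun _ => -C, |C|, by simp, by simp, fun x y => ?_, by simp⟩
    simpa using (abs_le.1 (hα x y)).1
  obtain ⟨a, ha, hmin⟩ := exists_bounded_forall_sub_le hS hα hne
  obtain ⟨⟨x₀, y₀⟩, -⟩ := hne
  have : Nonempty X := ⟨x₀⟩
  have hC : 0 ≤ C := (abs_nonneg _).trans (hα x₀ y₀)
  refine ⟨a, costTransform α a, C + 4 * C, fun x => (ha x).trans (by linarith),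
    abs_costTransform_le hα ha, fun x y => ?_, fun x y hxy => ?_⟩
  · linarith [costTransform_le hα ha x y]
  · have hle : α x y - a x ≤ costTransform α a y := le_ciInf fun x' => hmin x y x' hxy
    linarith [costTransform_le hα ha x y]

end Potentials

section StrongDuality

variable {m : X → ℝ} {n : Y → ℝ} {w : X × Y → ℝ} {α : X → Y → ℝ} {C : ℝ}

lemma IsTransportPlan.add_mul_rerouting (h : IsTransportPlan m n w) {S : Set (X × Y)}
    {d : X × Y →₀ ℝ} (hd : IsRerouting S 0 d) {ε : ℝ} (hε : ∀ p, 0 ≤ w p + ε * d p) :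
    IsTransportPlan m n fun p => w p + ε * d p where
  nonneg := hε
  hasSum_row x := by simpa using (h.hasSum_row x).add ((hd.hasSum_row x).mul_left ε)
  hasSum_col y := by simpa using (h.hasSum_col y).add ((hd.hasSum_col y).mul_left ε)

lemma IsTransportPlan.cost_add_mul (h : IsTransportPlan m n w) (hm : Summable m)
    (hα : ∀ x y, |α x y| ≤ C) (d : X × Y →₀ ℝ) (ε : ℝ) :
    ∑' p : X × Y, α p.1 p.2 * (w p + ε * d p) =
      ∑' p : X × Y, α p.1 p.2 * w p + ε * perturbationCost α d := by
  have hd := hasSum_mul_linearCombination (Function.uncurry α) d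
  have hsum := (h.summable_cost hm hα).hasSum.add (hd.mul_left ε)
  refine Eq.trans (tsum_congr fun p => ?_) hsum.tsum_eq
  rw [Function.uncurry_def]
  ring

theorem IsTransportPlan.isFinitelyOptimal_support (h : IsTransportPlan m n w) (hm : Summable m)
    (hα : ∀ x y, |α x y| ≤ C)
    (hmin : IsMinOn (fun w => ∑' p : X × Y, α p.1 p.2 * w p) {w | IsTransportPlan m n w} w) :
    IsFinitelyOptimal α (Function.support w) := by
  intro d hd
  obtain ⟨ε, hε, hnonneg⟩ := exists_pos_forall_nonneg_add_mul h.nonneg d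
    fun p hp => hd.nonneg_of_notMem p (Function.notMem_support.2 hp)
  have hle : ∑' p : X × Y, α p.1 p.2 * w p ≤ ∑' p : X × Y, α p.1 p.2 * (w p + ε * d p) :=
    hmin (h.add_mul_rerouting hd hnonneg)
  rw [h.cost_add_mul hm hα, le_add_iff_nonneg_right] at hle
  exact nonneg_of_mul_nonneg_right hle hε

theorem exists_isTransportPlan_and_potentials (hm : Summable m) (hn : Summable n)
    (hα : ∀ x y, |α x y| ≤ C) (hne : ∃ w, IsTransportPlan m n w) :
    ∃ (w : X × Y → ℝ) (a : X → ℝ) (b : Y → ℝ) (K : ℝ), IsTransportPlan m n w ∧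
      (∀ x, |a x| ≤ K) ∧ (∀ y, |b y| ≤ K) ∧ (∀ x y, a x + b y ≤ α x y) ∧
      ∀ x y, (x, y) ∈ Function.support w → a x + b y = α x y := by
  obtain ⟨w, hw, hmin⟩ := exists_isMinOn_cost hm hn hα hne
  obtain ⟨a, b, K, hpotentials⟩ :=
    exists_bounded_potentials (hw.isFinitelyOptimal_support hm hα hmin) hα
  exact ⟨w, a, b, K, hw, hpotentials⟩

end StrongDuality

section Couplings

variable {μ : PMF X} {ν : PMF Y}

lemma hasSum_toReal_pmf (μ : PMF X) : HasSum (fun x => (μ x).toReal) 1 :=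
  hasSum_toReal_of_tsum_eq μ.tsum_coe ENNReal.one_ne_top

lemma IsCoupling.isTransportPlan {ω : PMF (X × Y)} (h : IsCoupling μ ν ω) :
    IsTransportPlan (fun x => (μ x).toReal) (fun y => (ν y).toReal) fun p => (ω p).toReal where
  nonneg _ := ENNReal.toReal_nonneg
  hasSum_row x := hasSum_toReal_of_tsum_eq (h.1 x) (μ.apply_ne_top x)
  hasSum_col y := hasSum_toReal_of_tsum_eq (h.2 y) (ν.apply_ne_top y)

theorem IsCoupling.dual_le_Wcost {ω : PMF (X × Y)} (h : IsCoupling μ ν ω) {α : X → Y → ℝ} {C : ℝ}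
    (hα : ∀ x y, |α x y| ≤ C) {a : X → ℝ} {b : Y → ℝ}
    (ha : Summable fun x => a x * (μ x).toReal) (hb : Summable fun y => b y * (ν y).toReal)
    (hab : ∀ x y, a x + b y ≤ α x y) :
    (∑' x, a x * (μ x).toReal) + ∑' y, b y * (ν y).toReal ≤ Wcost α ω :=
  h.isTransportPlan.dual_le_cost (hasSum_toReal_pmf μ).summable hα ha hb hab

lemma IsTransportPlan.exists_isCoupling {w : X × Y → ℝ}
    (h : IsTransportPlan (fun x => (μ x).toReal) (fun y => (ν y).toReal) w) :
    ∃ ω : PMF (X × Y), IsCoupling μ ν ω ∧ ∀ p, (ω p).toReal = w p := by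
  have hrow (x : X) : ∑' y, ENNReal.ofReal (w (x, y)) = μ x := by
    rw [← ENNReal.ofReal_tsum_of_nonneg (fun _ => h.nonneg _) (h.hasSum_row x).summable,
      (h.hasSum_row x).tsum_eq, ENNReal.ofReal_toReal (μ.apply_ne_top x)]
  have hcol (y : Y) : ∑' x, ENNReal.ofReal (w (x, y)) = ν y := by
    rw [← ENNReal.ofReal_tsum_of_nonneg (fun _ => h.nonneg _) (h.hasSum_col y).summable,
      (h.hasSum_col y).tsum_eq, ENNReal.ofReal_toReal (ν.apply_ne_top y)]
  have htotal : ∑' p, ENNReal.ofReal (w p) = 1 := by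
    rw [ENNReal.tsum_prod', tsum_congr hrow, μ.tsum_coe]
  exact ⟨⟨fun p => ENNReal.ofReal (w p), htotal ▸ ENNReal.summable.hasSum⟩, ⟨hrow, hcol⟩,
    fun p => ENNReal.toReal_ofReal (h.nonneg p)⟩

theorem exists_isCoupling_and_potentials (μ : PMF X) (ν : PMF Y) {α : X → Y → ℝ} {C : ℝ}
    (hα : ∀ x y, |α x y| ≤ C) :
    ∃ (ω : PMF (X × Y)) (a : X → ℝ) (b : Y → ℝ), IsCoupling μ ν ω ∧
      BddAbove (Set.range a) ∧ BddAbove (Set.range b) ∧ (∀ x y, a x + b y ≤ α x y) ∧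
      Summable (fun x => a x * (μ x).toReal) ∧ Summable (fun y => b y * (ν y).toReal) ∧
      Wcost α ω = (∑' x, a x * (μ x).toReal) + ∑' y, b y * (ν y).toReal := by
  have hμ := hasSum_toReal_pmf μ
  have hν := hasSum_toReal_pmf ν
  obtain ⟨w, a, b, K, hw, ha, hb, hle, heq⟩ := exists_isTransportPlan_and_potentials
    hμ.summable hν.summable hα
    ⟨_, .of_mul (fun _ => ENNReal.toReal_nonneg) (fun _ => ENNReal.toReal_nonneg) hμ hν⟩
  have hsa := summable_mul_of_abs_le hμ.summable (fun _ => ENNReal.toReal_nonneg) ha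
  have hsb := summable_mul_of_abs_le hν.summable (fun _ => ENNReal.toReal_nonneg) hb
  obtain ⟨ω, hω, hωw⟩ := hw.exists_isCoupling
  refine ⟨ω, a, b, hω, ⟨K, Set.forall_mem_range.2 fun x => (abs_le.1 (ha x)).2⟩,
    ⟨K, Set.forall_mem_range.2 fun y => (abs_le.1 (hb y)).2⟩, hle, hsa, hsb, ?_⟩
  simp only [Wcost, hωw]
  exact hw.cost_eq_dual_of_eqOn_support hsa hsb heq

end Couplings

end Transport

theorem wasserstein_duality_general {X Y : Type*} (μ : PMF X) (ν : PMF Y) (α : X → Y → ℝ)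
    {C : ℝ} (hα : ∀ x y, |α x y| ≤ C) :
    (∃ ω, IsCoupling μ ν ω ∧ Wcost α ω = Wass α μ ν) ∧
    Wass α μ ν = sSup {c : ℝ | ∃ (a : X → ℝ) (b : Y → ℝ),
        BddAbove (Set.range a) ∧ BddAbove (Set.range b) ∧
        (∀ x y, a x + b y ≤ α x y) ∧
        Summable (fun x => a x * (μ x).toReal) ∧
        Summable (fun y => b y * (ν y).toReal) ∧
        c = (∑' x, a x * (μ x).toReal) + ∑' y, b y * (ν y).toReal} ∧
    ∃ (a : X → ℝ) (b : Y → ℝ),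
        BddAbove (Set.range a) ∧ BddAbove (Set.range b) ∧
        (∀ x y, a x + b y ≤ α x y) ∧
        Summable (fun x => a x * (μ x).toReal) ∧
        Summable (fun y => b y * (ν y).toReal) ∧
        Wass α μ ν = (∑' x, a x * (μ x).toReal) + ∑' y, b y * (ν y).toReal := by
  obtain ⟨ω, a, b, hω, hba, hbb, hab, hsa, hsb, hvalue⟩ := exists_isCoupling_and_potentials μ ν hα
  have hW : Wass α μ ν = Wcost α ω := by
    refine IsLeast.csInf_eq ⟨⟨ω, hω, rfl⟩, ?_⟩
    rintro _ ⟨ω', hω', rfl⟩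
    exact hvalue.trans_le (hω'.dual_le_Wcost hα hsa hsb hab)
  have hmax := hW.trans hvalue
  refine ⟨⟨ω, hω, hW.symm⟩, ?_, a, b, hba, hbb, hab, hsa, hsb, hmax⟩
  symm
  refine IsGreatest.csSup_eq ⟨⟨a, b, hba, hbb, hab, hsa, hsb, hmax⟩, ?_⟩
  rintro _ ⟨a', b', -, -, hab', hsa', hsb', rfl⟩
  exact (hω.dual_le_Wcost hα hsa' hsb' hab').trans_eq hW.symm

/-- duality for the Wasserstein lifting on countable types:
(i) the infimum defining `W α(μ,ν)` is attained by some coupling; (ii) `W α(μ,ν)` equals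
the supremum of the dual transportation problem; (iii) that supremum is attained. -/
theorem wasserstein_duality {X Y : Type*} [Countable X] [Countable Y]
    (μ : PMF X) (ν : PMF Y) (α : X → Y → ℝ)
    (hα : ∀ x y, α x y ∈ Set.Icc (0 : ℝ) 1) :
    (∃ ω, IsCoupling μ ν ω ∧ Wcost α ω = Wass α μ ν) ∧
    Wass α μ ν = sSup {c : ℝ | ∃ (a : X → ℝ) (b : Y → ℝ),
        BddAbove (Set.range a) ∧ BddAbove (Set.range b) ∧
        (∀ x y, a x + b y ≤ α x y) ∧
        Summable (fun x => a x * (μ x).toReal) ∧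
        Summable (fun y => b y * (ν y).toReal) ∧
        c = (∑' x, a x * (μ x).toReal) + ∑' y, b y * (ν y).toReal} ∧
    ∃ (a : X → ℝ) (b : Y → ℝ),
        BddAbove (Set.range a) ∧ BddAbove (Set.range b) ∧
        (∀ x y, a x + b y ≤ α x y) ∧
        Summable (fun x => a x * (μ x).toReal) ∧
        Summable (fun y => b y * (ν y).toReal) ∧
        Wass α μ ν = (∑' x, a x * (μ x).toReal) + ∑' y, b y * (ν y).toReal :=
  wasserstein_duality_general μ ν α fun x y =>
    (abs_of_nonneg (hα x y).1).trans_le (hα x y).2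
end

section
/- Let X, Y, Z be countable types, α : X → Y → ℝ and β : Y → Z → ℝ with values in [0,1], and define their composition in the unit interval quantale by (β · α)(x, z) = inf_y min(α(x, y) + β(y, z), 1). Then for all PMFs μ on X, ν on Y, and ρ on Z: W(β · α)(μ, ρ) ≤ Wα(μ, ν) + Wβ(ν, ρ). (This is the composition law Wβ · Wα ≤ W(β · α) of V-relators, instantiated to the Wasserstein lifting.) -/
open scoped ENNReal

/-!
A coupling `b` of `ν` and `ρ` disintegrates into a kernel `κ : Y → PMF Z` over its first marginal
`ν`. Feeding the second coordinate of a coupling `a` of `μ` and `ν` into `κ` glues `a` and `b` to a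
distribution on `(X × Y) × Z` whose `X × Y` and `Y × Z` marginals are `a` and `b`. Its `X × Z`
marginal is a coupling of `μ` and `ρ`, and since all three transport costs are expectations under
the same distribution, the bound `(β · α) x z ≤ α x y + β y z` can be integrated pointwise. Working
in `ℝ≥0∞` makes every sum converge; for bounded nonnegative costs nothing is lost on returning to
`ℝ`.
-/

section Marginals

variable {X Y : Type*}

theorem tsum_mul_pmf_map (p : PMF X) (f : X → Y) (g : Y → ℝ≥0∞) :
    ∑' y, g y * p.map f y = ∑' x, g (f x) * p x := by
  simp_rw [PMF.map_apply, ← ENNReal.tsum_mul_left, mul_ite, mul_zero]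
  rw [ENNReal.tsum_comm]
  simp only [tsum_ite_eq]

theorem pmf_map_fst_apply (ω : PMF (X × Y)) (x : X) : ω.map Prod.fst x = ∑' y, ω (x, y) := by
  rw [PMF.map_apply, ENNReal.tsum_prod', tsum_eq_single x fun x' hx' => by simp [hx'.symm]]
  simp only [if_true]

theorem pmf_map_snd_apply (ω : PMF (X × Y)) (y : Y) : ω.map Prod.snd y = ∑' x, ω (x, y) := by
  rw [PMF.map_apply, ENNReal.tsum_prod']
  simp only [tsum_ite_eq']

theorem isCoupling_iff_map {μ : PMF X} {ν : PMF Y} {ω : PMF (X × Y)} :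
    IsCoupling μ ν ω ↔ ω.map Prod.fst = μ ∧ ω.map Prod.snd = ν := by
  simp only [IsCoupling, PMF.ext_iff, pmf_map_fst_apply, pmf_map_snd_apply]

end Marginals

section CompProd

variable {X Y Z : Type*}

/-- The composition-product of a distribution `μ` and a Markov kernel `κ`: the joint distribution
of `(x, y)`, where `x` is drawn from `μ` and then `y` from `κ x`. -/
noncomputable def pmfCompProd (μ : PMF X) (κ : X → PMF Y) : PMF (X × Y) :=
  μ.bind fun x => (κ x).map (Prod.mk x)

theorem pmfCompProd_apply (μ : PMF X) (κ : X → PMF Y) (x : X) (y : Y) :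
    pmfCompProd μ κ (x, y) = μ x * κ x y := by
  rw [pmfCompProd, PMF.bind_apply, tsum_eq_single x fun x' hx' => by simp [hx'.symm],
    PMF.map_apply, tsum_eq_single y fun y' hy' => by simp [hy'.symm], if_pos rfl]

theorem map_fst_pmfCompProd (μ : PMF X) (κ : X → PMF Y) :
    (pmfCompProd μ κ).map Prod.fst = μ := by
  simp_rw [pmfCompProd, PMF.map_bind, PMF.map_comp]
  exact (congrArg μ.bind (funext fun x => PMF.map_const (κ x) x)).trans μ.bind_pure

theorem map_snd_pmfCompProd (μ : PMF X) (κ : X → PMF Y) :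
    (pmfCompProd μ κ).map Prod.snd = μ.bind κ := by
  simp_rw [pmfCompProd, PMF.map_bind, PMF.map_comp]
  exact congrArg μ.bind (funext fun x => (κ x).map_id)

theorem map_pmfCompProd_comp (p : PMF X) (f : X → Y) (κ : Y → PMF Z) :
    (pmfCompProd p (κ ∘ f)).map (Prod.map f id) = pmfCompProd (p.map f) κ := by
  simp_rw [pmfCompProd, PMF.map_bind, PMF.bind_map, PMF.map_comp]
  rfl

theorem exists_pmfCompProd_eq (ω : PMF (X × Y)) :
    ∃ κ : X → PMF Y, pmfCompProd (ω.map Prod.fst) κ = ω := by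
  have conditional (x : X) : ∃ q : PMF Y, ∀ y, ω.map Prod.fst x * q y = ω (x, y) := by
    by_cases hx : ∑' y, ω (x, y) = 0
    · obtain ⟨⟨-, y₀⟩, -⟩ := ω.support_nonempty
      refine ⟨PMF.pure y₀, fun y => ?_⟩
      rw [pmf_map_fst_apply, hx, zero_mul, ENNReal.tsum_eq_zero.mp hx y]
    · have hx_top : ∑' y, ω (x, y) ≠ ∞ := pmf_map_fst_apply ω x ▸ PMF.apply_ne_top _ x
      refine ⟨PMF.normalize (fun y => ω (x, y)) hx hx_top, fun y => ?_⟩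
      rw [pmf_map_fst_apply, PMF.normalize_apply, mul_left_comm, ENNReal.mul_inv_cancel hx hx_top,
        mul_one]
  choose κ hκ using conditional
  exact ⟨κ, PMF.ext fun p => (pmfCompProd_apply _ κ p.1 p.2).trans (hκ p.1 p.2)⟩

end CompProd

section Couplings

variable {X Y Z : Type*} {μ : PMF X} {ν : PMF Y} {ρ : PMF Z}

theorem exists_isCoupling (μ : PMF X) (ν : PMF Y) : ∃ ω, IsCoupling μ ν ω :=
  ⟨pmfCompProd μ fun _ => ν, isCoupling_iff_map.mpr
    ⟨map_fst_pmfCompProd μ _, (map_snd_pmfCompProd μ _).trans (μ.bind_const ν)⟩⟩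

theorem exists_gluing (a : PMF (X × Y)) (b : PMF (Y × Z))
    (hab : a.map Prod.snd = b.map Prod.fst) :
    ∃ τ : PMF ((X × Y) × Z), τ.map Prod.fst = a ∧ τ.map (Prod.map Prod.snd id) = b := by
  obtain ⟨κ, hκ⟩ := exists_pmfCompProd_eq b
  exact ⟨pmfCompProd a (κ ∘ Prod.snd), map_fst_pmfCompProd a _, by
    rw [map_pmfCompProd_comp, hab, hκ]⟩

theorem isCoupling_map_of_gluing {τ : PMF ((X × Y) × Z)}
    (hμν : IsCoupling μ ν (τ.map Prod.fst))
    (hνρ : IsCoupling ν ρ (τ.map (Prod.map Prod.snd id))) :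
    IsCoupling μ ρ (τ.map (Prod.map Prod.fst id)) := by
  simp only [isCoupling_iff_map, PMF.map_comp] at hμν hνρ ⊢
  exact ⟨hμν.1, hνρ.2⟩

end Couplings

section ExtendedCost

variable {X Y Z : Type*} {μ : PMF X} {ν : PMF Y} {ρ : PMF Z}

/-- The transport cost of `ω` for an extended nonnegative cost function; the counterpart of `Wcost`
in which divergent sums have the value `∞` instead of `0`. -/
noncomputable def eWcost (c : X → Y → ℝ≥0∞) (ω : PMF (X × Y)) : ℝ≥0∞ :=
  ∑' p : X × Y, c p.1 p.2 * ω p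

/-- The Wasserstein lifting of an extended nonnegative cost function; the counterpart of `Wass`. -/
noncomputable def eWass (c : X → Y → ℝ≥0∞) (μ : PMF X) (ν : PMF Y) : ℝ≥0∞ :=
  sInf (eWcost c '' {ω | IsCoupling μ ν ω})

theorem eWcost_map {W : Type*} (c : X → Y → ℝ≥0∞) (p : PMF W) (f : W → X × Y) :
    eWcost c (p.map f) = ∑' w, c (f w).1 (f w).2 * p w :=
  tsum_mul_pmf_map p f fun q => c q.1 q.2

theorem eWass_le_eWcost (c : X → Y → ℝ≥0∞) {ω : PMF (X × Y)} (hω : IsCoupling μ ν ω) :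
    eWass c μ ν ≤ eWcost c ω :=
  sInf_le ⟨ω, hω, rfl⟩

theorem eWcost_le_of_le {c : X → Y → ℝ≥0∞} {C : ℝ≥0∞} (hc : ∀ x y, c x y ≤ C)
    (ω : PMF (X × Y)) : eWcost c ω ≤ C :=
  calc ∑' p : X × Y, c p.1 p.2 * ω p
      ≤ ∑' p, C * ω p := ENNReal.tsum_le_tsum fun p => by gcongr; exact hc p.1 p.2
    _ = C := by rw [ENNReal.tsum_mul_left, ω.tsum_coe, mul_one]

theorem eWass_le_of_le {c : X → Y → ℝ≥0∞} {C : ℝ≥0∞} (hc : ∀ x y, c x y ≤ C)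
    (μ : PMF X) (ν : PMF Y) : eWass c μ ν ≤ C := by
  obtain ⟨ω, hω⟩ := exists_isCoupling μ ν
  exact (eWass_le_eWcost c hω).trans (eWcost_le_of_le hc ω)

variable {α : X → Y → ℝ≥0∞} {β : Y → Z → ℝ≥0∞} {γ : X → Z → ℝ≥0∞}

theorem eWcost_map_le_add_of_gluing (hγ : ∀ x y z, γ x z ≤ α x y + β y z)
    (τ : PMF ((X × Y) × Z)) :
    eWcost γ (τ.map (Prod.map Prod.fst id)) ≤
      eWcost α (τ.map Prod.fst) + eWcost β (τ.map (Prod.map Prod.snd id)) := by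
  simp only [eWcost_map, ← ENNReal.tsum_add, ← add_mul]
  gcongr
  exact hγ _ _ _

theorem eWass_le_eWcost_add_eWcost (hγ : ∀ x y z, γ x z ≤ α x y + β y z)
    {a : PMF (X × Y)} {b : PMF (Y × Z)} (ha : IsCoupling μ ν a) (hb : IsCoupling ν ρ b) :
    eWass γ μ ρ ≤ eWcost α a + eWcost β b := by
  have hab : a.map Prod.snd = b.map Prod.fst :=
    (isCoupling_iff_map.mp ha).2.trans (isCoupling_iff_map.mp hb).1.symm
  obtain ⟨τ, rfl, rfl⟩ := exists_gluing a b hab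
  exact (eWass_le_eWcost γ (isCoupling_map_of_gluing ha hb)).trans
    (eWcost_map_le_add_of_gluing hγ τ)

theorem eWass_le_add (hγ : ∀ x y z, γ x z ≤ α x y + β y z) (μ : PMF X) (ν : PMF Y) (ρ : PMF Z) :
    eWass γ μ ρ ≤ eWass α μ ν + eWass β ν ρ := by
  rw [eWass.eq_def α, eWass.eq_def β, ENNReal.add_sInf]
  refine le_iInf₂ ?_
  rintro _ ⟨b, hb, rfl⟩
  rw [ENNReal.sInf_add]
  refine le_iInf₂ ?_
  rintro _ ⟨a, ha, rfl⟩
  exact eWass_le_eWcost_add_eWcost hγ ha hb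

end ExtendedCost

section Truncation

variable {ι : Type*} {f : ι → ℝ}

theorem iInf_min_one_nonneg (hf : ∀ i, 0 ≤ f i) : 0 ≤ ⨅ i, min (f i) 1 :=
  Real.iInf_nonneg fun i => le_min (hf i) zero_le_one

theorem iInf_min_one_le (hf : ∀ i, 0 ≤ f i) (i : ι) : ⨅ j, min (f j) 1 ≤ f i :=
  have bounded : BddBelow (Set.range fun j => min (f j) 1) :=
    ⟨0, Set.forall_mem_range.mpr fun j => le_min (hf j) zero_le_one⟩
  (ciInf_le bounded i).trans (min_le_left _ _)

end Truncation

section RealCost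

variable {X Y Z : Type*}

theorem Wcost_eq_toReal_eWcost {c : X → Y → ℝ} (hc : ∀ x y, 0 ≤ c x y) (ω : PMF (X × Y)) :
    Wcost c ω = (eWcost (fun x y => ENNReal.ofReal (c x y)) ω).toReal := by
  rw [eWcost, ENNReal.tsum_toReal_eq fun p =>
    ENNReal.mul_ne_top ENNReal.ofReal_ne_top (ω.apply_ne_top p)]
  simp only [Wcost, ENNReal.toReal_mul, ENNReal.toReal_ofReal (hc _ _)]

theorem Wass_eq_toReal_eWass {c : X → Y → ℝ} {C : ℝ} (hc : ∀ x y, c x y ∈ Set.Icc 0 C)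
    (μ : PMF X) (ν : PMF Y) :
    Wass c μ ν = (eWass (fun x y => ENNReal.ofReal (c x y)) μ ν).toReal := by
  rw [eWass, ENNReal.toReal_sInf, Set.image_image]
  · simp only [Wass, ← Wcost_eq_toReal_eWcost fun x y => (hc x y).1]
  · rintro _ ⟨ω, -, rfl⟩
    exact ne_top_of_le_ne_top ENNReal.ofReal_ne_top
      (eWcost_le_of_le (fun x y => ENNReal.ofReal_le_ofReal (hc x y).2) ω)

theorem wasserstein_comp_general {α : X → Y → ℝ} {β : Y → Z → ℝ} {γ : X → Z → ℝ} {A B : ℝ}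
    (hα : ∀ x y, α x y ∈ Set.Icc 0 A) (hβ : ∀ y z, β y z ∈ Set.Icc 0 B)
    (hγ_nonneg : ∀ x z, 0 ≤ γ x z) (hγ_le : ∀ x y z, γ x z ≤ α x y + β y z)
    (μ : PMF X) (ν : PMF Y) (ρ : PMF Z) :
    Wass γ μ ρ ≤ Wass α μ ν + Wass β ν ρ := by
  obtain ⟨y₀, -⟩ := ν.support_nonempty
  have hγ (x z) : γ x z ∈ Set.Icc 0 (A + B) :=
    ⟨hγ_nonneg x z, (hγ_le x y₀ z).trans (add_le_add (hα x y₀).2 (hβ y₀ z).2)⟩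
  have hα_top := ne_top_of_le_ne_top ENNReal.ofReal_ne_top
    (eWass_le_of_le (fun x y => ENNReal.ofReal_le_ofReal (hα x y).2) μ ν)
  have hβ_top := ne_top_of_le_ne_top ENNReal.ofReal_ne_top
    (eWass_le_of_le (fun y z => ENNReal.ofReal_le_ofReal (hβ y z).2) ν ρ)
  rw [Wass_eq_toReal_eWass hα, Wass_eq_toReal_eWass hβ, Wass_eq_toReal_eWass hγ,
    ← ENNReal.toReal_add hα_top hβ_top]
  refine ENNReal.toReal_mono (ENNReal.add_ne_top.mpr ⟨hα_top, hβ_top⟩)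
    (eWass_le_add (fun x y z => ?_) μ ν ρ)
  rw [← ENNReal.ofReal_add (hα x y).1 (hβ y z).1]
  exact ENNReal.ofReal_le_ofReal (hγ_le x y z)

end RealCost

/-- the Wasserstein lifting satisfies the composition law of `V`-relators for
the unit interval quantale: `W(β · α)(μ, ρ) ≤ Wα(μ, ν) + Wβ(ν, ρ)`, where
`(β · α)(x, z) = ⨅ y, min (α x y + β y z) 1`. -/
theorem wasserstein_comp {X Y Z : Type*} [Countable X] [Countable Y] [Countable Z]
    (α : X → Y → ℝ) (β : Y → Z → ℝ)
    (hα : ∀ x y, α x y ∈ Set.Icc (0 : ℝ) 1) (hβ : ∀ y z, β y z ∈ Set.Icc (0 : ℝ) 1)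
    (μ : PMF X) (ν : PMF Y) (ρ : PMF Z) :
    Wass (fun x z => ⨅ y, min (α x y + β y z) 1) μ ρ ≤ Wass α μ ν + Wass β ν ρ := by
  have sum_nonneg (x y z) : 0 ≤ α x y + β y z := add_nonneg (hα x y).1 (hβ y z).1
  exact wasserstein_comp_general hα hβ (fun x z => iInf_min_one_nonneg (sum_nonneg x · z))
    (fun x y z => iInf_min_one_le (sum_nonneg x · z) y) μ ν ρ
end

section
/- Let X and Y be countable types, μ ∈ PMF X, ν ∈ PMF Y, and α : X → Y → ℝ with values in [0,1]. If Wα(μ, ν) = 0, then there exists a coupling ω ∈ Ω(μ, ν) such that for all x ∈ X and y ∈ Y, ω(x, y) > 0 implies α(x, y) = 0. (This expresses that the Wasserstein lifting is compatible with the kernel map φ sending a distance to the assertion that it equals the quantale unit.) -/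
open scoped ENNReal

/-!
The infimum defining `Wass` is attained. In the product topology on `X × Y → ℝ≥0∞`, compact by
Tychonoff, the couplings form a closed set: the rows and columns of a coupling are dominated by the
marginals, so no mass escapes in a limit. The transport cost is a supremum of finite partial sums,
hence lower semicontinuous, and so has a minimum on that set. If the minimum is `0`, every term of
the sum of nonnegative numbers `α x y * ω (x, y)` vanishes.
-/

section Sums

variable {ι : Type*}

theorem continuousOn_tsum_Iic {b : ι → ℝ≥0∞} (hb : ∑' i, b i ≠ ∞) :
    ContinuousOn (fun f : ι → ℝ≥0∞ ↦ ∑' i, f i) (Set.Iic b) := by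
  have ne_top : ∀ f ∈ Set.Iic b, ∀ i, f i ≠ ∞ := fun f hf i ↦
    ne_top_of_le_ne_top (ENNReal.ne_top_of_tsum_ne_top hb i) (hf i)
  have continuousOn_toReal : ContinuousOn (fun f : ι → ℝ≥0∞ ↦ ∑' i, (f i).toReal) (Set.Iic b) := by
    refine continuousOn_tsum (fun i ↦ ?_) (ENNReal.summable_toReal hb) fun i f hf ↦ ?_
    · exact ENNReal.continuousOn_toReal.comp (continuous_apply i).continuousOn
        fun f hf ↦ ne_top f hf i
    · rw [Real.norm_of_nonneg ENNReal.toReal_nonneg]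
      exact ENNReal.toReal_mono (ENNReal.ne_top_of_tsum_ne_top hb i) (hf i)
  refine (ENNReal.continuous_ofReal.comp_continuousOn continuousOn_toReal).congr fun f hf ↦ ?_
  have tsum_ne_top : ∑' i, f i ≠ ∞ := ne_top_of_le_ne_top hb (ENNReal.tsum_le_tsum hf)
  simp only [Function.comp_apply, ← ENNReal.tsum_toReal_eq (ne_top f hf),
    ENNReal.ofReal_toReal tsum_ne_top]

theorem isClosed_Iic_inter_tsum_comp_eq {κ : Type*} {b : κ → ℝ≥0∞} (e : ι → κ)
    (hb : ∑' i, b (e i) ≠ ∞) (m : ℝ≥0∞) :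
    IsClosed (Set.Iic b ∩ {f | ∑' i, f (e i) = m}) := by
  have continuous_comp : Continuous fun (f : κ → ℝ≥0∞) (i : ι) ↦ f (e i) := by fun_prop
  have continuousOn_tsum_comp :
      ContinuousOn (fun f : κ → ℝ≥0∞ ↦ ∑' i, f (e i)) (Set.Iic b) :=
    (continuousOn_tsum_Iic hb).comp continuous_comp.continuousOn fun f hf i ↦ hf (e i)
  exact continuousOn_tsum_comp.preimage_isClosed_of_isClosed isClosed_Iic isClosed_singleton

theorem lowerSemicontinuous_tsum_mul {a : ι → ℝ≥0∞} (ha : ∀ i, a i ≠ ∞) :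
    LowerSemicontinuous fun f : ι → ℝ≥0∞ ↦ ∑' i, a i * f i :=
  lowerSemicontinuous_tsum fun i ↦
    ((ENNReal.continuous_const_mul (ha i)).comp (continuous_apply i)).lowerSemicontinuous

theorem summable_mul_toReal_of_abs_le {a : ι → ℝ} {C : ℝ} (ha : ∀ i, |a i| ≤ C) (p : PMF ι) :
    Summable fun i ↦ a i * (p i).toReal := by
  refine ((ENNReal.summable_toReal p.tsum_coe_ne_top).mul_left C).of_norm_bounded fun i ↦ ?_
  rw [norm_mul, Real.norm_of_nonneg ENNReal.toReal_nonneg]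
  exact mul_le_mul_of_nonneg_right (ha i) ENNReal.toReal_nonneg

end Sums

section Transport

variable {X Y : Type*}

/-- The couplings of `μ` and `ν`, as bare functions: the nonnegative matrices with row sums `μ` and
column sums `ν`. Unlike `PMF (X × Y)`, the ambient space `X × Y → ℝ≥0∞` has a (compact) topology. -/
def transportPlans (μ : X → ℝ≥0∞) (ν : Y → ℝ≥0∞) : Set (X × Y → ℝ≥0∞) :=
  {f | (∀ x, ∑' y, f (x, y) = μ x) ∧ ∀ y, ∑' x, f (x, y) = ν y}

section TransportPlans

variable {μ : X → ℝ≥0∞} {ν : Y → ℝ≥0∞}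

theorem le_fst_of_mem_transportPlans {f : X × Y → ℝ≥0∞} (hf : f ∈ transportPlans μ ν) (x : X)
    (y : Y) : f (x, y) ≤ μ x :=
  (ENNReal.le_tsum (f := fun y ↦ f (x, y)) y).trans_eq (hf.1 x)

theorem le_snd_of_mem_transportPlans {f : X × Y → ℝ≥0∞} (hf : f ∈ transportPlans μ ν) (x : X)
    (y : Y) : f (x, y) ≤ ν y :=
  (ENNReal.le_tsum (f := fun x ↦ f (x, y)) x).trans_eq (hf.2 y)

theorem isCompact_transportPlans (hμ : ∑' x, μ x ≠ ∞) (hν : ∑' y, ν y ≠ ∞) :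
    IsCompact (transportPlans μ ν) := by
  let bound : X × Y → ℝ≥0∞ := fun p ↦ min (μ p.1) (ν p.2)
  have isClosed_row (x : X) : IsClosed (Set.Iic bound ∩ {f | ∑' y, f (x, y) = μ x}) :=
    isClosed_Iic_inter_tsum_comp_eq (fun y ↦ (x, y))
      (ne_top_of_le_ne_top hν (ENNReal.tsum_le_tsum fun _ ↦ min_le_right _ _)) _
  have isClosed_column (y : Y) : IsClosed (Set.Iic bound ∩ {f | ∑' x, f (x, y) = ν y}) :=
    isClosed_Iic_inter_tsum_comp_eq (fun x ↦ (x, y))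
      (ne_top_of_le_ne_top hμ (ENNReal.tsum_le_tsum fun _ ↦ min_le_left _ _)) _
  have eq_inter : transportPlans μ ν = (⋂ x, Set.Iic bound ∩ {f | ∑' y, f (x, y) = μ x}) ∩
      ⋂ y, Set.Iic bound ∩ {f | ∑' x, f (x, y) = ν y} := by
    ext f
    have mem_Iic_bound (hf : f ∈ transportPlans μ ν) : f ∈ Set.Iic bound := fun p ↦
      le_min (le_fst_of_mem_transportPlans hf p.1 p.2) (le_snd_of_mem_transportPlans hf p.1 p.2)
    simp only [Set.mem_inter_iff, Set.mem_iInter]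
    exact ⟨fun hf ↦ ⟨fun x ↦ ⟨mem_Iic_bound hf, hf.1 x⟩, fun y ↦ ⟨mem_Iic_bound hf, hf.2 y⟩⟩,
      fun hf ↦ ⟨fun x ↦ (hf.1 x).2, fun y ↦ (hf.2 y).2⟩⟩
  rw [eq_inter]
  exact ((isClosed_iInter isClosed_row).inter (isClosed_iInter isClosed_column)).isCompact

end TransportPlans

section Coupling

variable (μ : PMF X) (ν : PMF Y)

theorem transportPlans_nonempty : (transportPlans μ ν).Nonempty := by
  refine ⟨fun p ↦ μ p.1 * ν p.2, fun x ↦ ?_, fun y ↦ ?_⟩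
  · simp only [ENNReal.tsum_mul_left, PMF.tsum_coe, mul_one]
  · simp only [ENNReal.tsum_mul_right, PMF.tsum_coe, one_mul]

variable {μ ν}

theorem exists_isCoupling_coe_eq {f : X × Y → ℝ≥0∞} (hf : f ∈ transportPlans μ ν) :
    ∃ ω, IsCoupling μ ν ω ∧ ⇑ω = f := by
  have tsum_eq_one : ∑' p, f p = 1 :=
    calc ∑' p, f p = ∑' x, ∑' y, f (x, y) := ENNReal.tsum_prod (f := fun x y ↦ f (x, y))
      _ = ∑' x, μ x := tsum_congr hf.1
      _ = 1 := μ.tsum_coe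
  exact ⟨⟨f, tsum_eq_one ▸ ENNReal.summable.hasSum⟩, hf, rfl⟩

variable (μ ν) in
theorem exists_isCoupling_forall_tsum_mul_le {a : X × Y → ℝ≥0∞} (ha : ∀ p, a p ≠ ∞) :
    ∃ ω, IsCoupling μ ν ω ∧
      ∀ ω', IsCoupling μ ν ω' → ∑' p, a p * ω p ≤ ∑' p, a p * ω' p := by
  obtain ⟨f, hf, isMinOn_f⟩ := (lowerSemicontinuous_tsum_mul ha).lowerSemicontinuousOn _
    |>.exists_isMinOn (transportPlans_nonempty μ ν)
      (isCompact_transportPlans μ.tsum_coe_ne_top ν.tsum_coe_ne_top)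
  obtain ⟨ω, hω, rfl⟩ := exists_isCoupling_coe_eq hf
  exact ⟨ω, hω, fun ω' hω' ↦ isMinOn_f hω'⟩

end Coupling

section Cost

variable {α : X → Y → ℝ}

theorem wcost_nonneg (hα : ∀ x y, 0 ≤ α x y) (ω : PMF (X × Y)) : 0 ≤ Wcost α ω :=
  tsum_nonneg fun _ ↦ mul_nonneg (hα _ _) ENNReal.toReal_nonneg

theorem ofReal_wcost (hα : ∀ x y, 0 ≤ α x y) {ω : PMF (X × Y)}
    (hω : Summable fun p : X × Y ↦ α p.1 p.2 * (ω p).toReal) :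
    ENNReal.ofReal (Wcost α ω) = ∑' p : X × Y, ENNReal.ofReal (α p.1 p.2) * ω p := by
  rw [Wcost, ENNReal.ofReal_tsum_of_nonneg
    (fun _ ↦ mul_nonneg (hα _ _) ENNReal.toReal_nonneg) hω]
  refine tsum_congr fun p ↦ ?_
  rw [ENNReal.ofReal_mul (hα _ _), ENNReal.ofReal_toReal (ω.apply_ne_top p)]

theorem eq_zero_of_wcost_eq_zero (hα : ∀ x y, 0 ≤ α x y) {ω : PMF (X × Y)}
    (hω : Summable fun p : X × Y ↦ α p.1 p.2 * (ω p).toReal) (hcost : Wcost α ω = 0) {x : X}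
    {y : Y} (hxy : 0 < ω (x, y)) : α x y = 0 := by
  have tsum_eq_zero : ∑' p : X × Y, ENNReal.ofReal (α p.1 p.2) * ω p = 0 := by
    rw [← ofReal_wcost hα hω, hcost, ENNReal.ofReal_zero]
  have ofReal_eq_zero : ENNReal.ofReal (α x y) = 0 :=
    (mul_eq_zero.1 (ENNReal.tsum_eq_zero.1 tsum_eq_zero (x, y))).resolve_right hxy.ne'
  exact (ENNReal.ofReal_eq_zero.1 ofReal_eq_zero).antisymm (hα x y)

theorem exists_isCoupling_wcost_eq_wass {μ : PMF X} {ν : PMF Y} (hα : ∀ x y, 0 ≤ α x y)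
    (hsum : ∀ ω, IsCoupling μ ν ω → Summable fun p : X × Y ↦ α p.1 p.2 * (ω p).toReal) :
    ∃ ω, IsCoupling μ ν ω ∧ Wcost α ω = Wass α μ ν := by
  obtain ⟨ω, hω, tsum_le⟩ := exists_isCoupling_forall_tsum_mul_le μ ν
    (a := fun p ↦ ENNReal.ofReal (α p.1 p.2)) fun _ ↦ ENNReal.ofReal_ne_top
  have wcost_le (ω') (hω' : IsCoupling μ ν ω') : Wcost α ω ≤ Wcost α ω' := by
    rw [← ENNReal.ofReal_le_ofReal_iff (wcost_nonneg hα ω'), ofReal_wcost hα (hsum ω hω),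
      ofReal_wcost hα (hsum ω' hω')]
    exact tsum_le ω' hω'
  have isLeast_wcost : IsLeast (Wcost α '' {ω | IsCoupling μ ν ω}) (Wcost α ω) :=
    ⟨Set.mem_image_of_mem _ hω, Set.forall_mem_image.2 wcost_le⟩
  exact ⟨ω, hω, isLeast_wcost.csInf_eq.symm⟩

end Cost

theorem wasserstein_kernel_general (μ : PMF X) (ν : PMF Y) (α : X → Y → ℝ)
    (hα : ∀ x y, 0 ≤ α x y)
    (hsum : ∀ ω, IsCoupling μ ν ω → Summable fun p : X × Y ↦ α p.1 p.2 * (ω p).toReal)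
    (h : Wass α μ ν = 0) :
    ∃ ω, IsCoupling μ ν ω ∧ ∀ x y, 0 < ω (x, y) → α x y = 0 := by
  obtain ⟨ω, hω, wcost_eq⟩ := exists_isCoupling_wcost_eq_wass hα hsum
  exact ⟨ω, hω, fun _ _ ↦ eq_zero_of_wcost_eq_zero hα (hsum ω hω) (wcost_eq.trans h)⟩

end Transport

/-- if `W α(μ, ν) = 0` then there is a coupling `ω` of `μ` and `ν` such
that `α(x, y) = 0` whenever `ω(x, y) > 0` (compatibility of the Wasserstein lifting
with the kernel map `φ`). -/
theorem wasserstein_kernel {X Y : Type*} [Countable X] [Countable Y]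
    (μ : PMF X) (ν : PMF Y) (α : X → Y → ℝ)
    (hα : ∀ x y, α x y ∈ Set.Icc (0 : ℝ) 1)
    (h : Wass α μ ν = 0) :
    ∃ ω, IsCoupling μ ν ω ∧ ∀ x y, 0 < ω (x, y) → α x y = 0 :=
  wasserstein_kernel_general μ ν α (fun x y ↦ (hα x y).1)
    (fun ω _ ↦ summable_mul_toReal_of_abs_le
      (fun p ↦ (abs_of_nonneg (hα p.1 p.2).1).trans_le (hα p.1 p.2).2) ω) h
end

section
/- Let V be a commutative integral quantale. For a V-relation α : X ⇸ Y define the Hausdorff lifting Hα : Set X ⇸ Set Y by Hα(A, B) = ⨅_{x ∈ A} ⨆_{y ∈ B} α(x, y). Then H is a V-relator for the powerset functor (whose action on a function f is the image map Set.image f): (1) k ≤ H(id_X)(A, A) for every A ⊆ X; (2) Hβ · Hα ≤ H(β · α) for all α : X ⇸ Y, β : Y ⇸ Z; (3) for every function f : X → Y and A ⊆ X, k ≤ H(graph f)(A, f '' A) and k ≤ H((graph f)°)(f '' A, A); (4) α ≤ β implies Hα ≤ Hβ. -/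
universe u v

/-- The Hausdorff lifting of a `V`-relation: `Hα(A, B) = ⨅_{x ∈ A} ⨆_{y ∈ B} α(x, y)`. -/
def hausdorffLift {V : Type v} [CompleteLattice V] {X Y : Type u}
    (α : X → Y → V) : Set X → Set Y → V :=
  fun A B => ⨅ x ∈ A, ⨆ y ∈ B, α x y

section Distrib

variable {V ι : Type*} [Semigroup V] [CompleteLattice V] [IsQuantale V]

theorem biSup_mul_distrib (s : Set ι) (f : ι → V) (a : V) :
    (⨆ i ∈ s, f i) * a = ⨆ i ∈ s, f i * a := by
  rw [← sSup_image, sSup_mul_distrib, iSup_image]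

theorem mul_biSup_distrib (a : V) (s : Set ι) (f : ι → V) :
    (a * ⨆ i ∈ s, f i) = ⨆ i ∈ s, a * f i := by
  rw [← sSup_image, mul_sSup_distrib, iSup_image]

end Distrib

section Graph

variable {V : Type v} [CompleteLattice V] [One V] {X Y : Type u}

theorem vid_self (x : X) : vid (V := V) X x x = 1 :=
  if_pos rfl

theorem vgraph_apply_self (f : X → Y) (x : X) : vgraph (V := V) f x (f x) = 1 :=
  if_pos rfl

end Graph

section HausdorffLift

variable {V : Type v} [CompleteLattice V] {X Y Z : Type u}

theorem hausdorffLift_mono {α β : X → Y → V} (h : α ≤ β) :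
    hausdorffLift α ≤ hausdorffLift β :=
  fun _ _ => iInf₂_mono fun x _ => iSup₂_mono fun y _ => h x y

theorem hausdorffLift_le_biSup (α : X → Y → V) {A : Set X} (B : Set Y) {x : X} (hx : x ∈ A) :
    hausdorffLift α A B ≤ ⨆ y ∈ B, α x y :=
  iInf₂_le x hx

theorem le_hausdorffLift_of_forall_exists {α : X → Y → V} {A : Set X} {B : Set Y} {c : V}
    (h : ∀ x ∈ A, ∃ y ∈ B, c ≤ α x y) : c ≤ hausdorffLift α A B :=
  le_iInf₂ fun x hx =>
    let ⟨y, hy, hc⟩ := h x hx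
    le_iSup₂_of_le y hy hc

theorem one_le_hausdorffLift_vid [One V] (A : Set X) :
    (1 : V) ≤ hausdorffLift (vid X) A A :=
  le_hausdorffLift_of_forall_exists fun x hx => ⟨x, hx, (vid_self x).ge⟩

theorem one_le_hausdorffLift_vgraph_image [One V] (f : X → Y) (A : Set X) :
    (1 : V) ≤ hausdorffLift (vgraph f) A (f '' A) :=
  le_hausdorffLift_of_forall_exists fun x hx =>
    ⟨f x, Set.mem_image_of_mem f hx, (vgraph_apply_self f x).ge⟩

theorem one_le_hausdorffLift_vdual_vgraph_image [One V] (f : X → Y) (A : Set X) :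
    (1 : V) ≤ hausdorffLift (vdual (vgraph f)) (f '' A) A := by
  refine le_hausdorffLift_of_forall_exists ?_
  rintro _ ⟨x, hx, rfl⟩
  exact ⟨x, hx, (vgraph_apply_self f x).ge⟩

theorem mul_le_vcomp [Mul V] (α : X → Y → V) (β : Y → Z → V) (x : X) (y : Y) (z : Z) :
    α x y * β y z ≤ vcomp β α x z :=
  le_iSup (fun y => α x y * β y z) y

theorem hausdorffLift_mul_hausdorffLift_le [Semigroup V] [IsQuantale V]
    (α : X → Y → V) (β : Y → Z → V) (A : Set X) (B : Set Y) (C : Set Z) :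
    hausdorffLift α A B * hausdorffLift β B C ≤ hausdorffLift (vcomp β α) A C := by
  refine le_iInf₂ fun x hx => ?_
  calc
    hausdorffLift α A B * hausdorffLift β B C
    _ ≤ (⨆ y ∈ B, α x y) * hausdorffLift β B C := by
      gcongr
      exact hausdorffLift_le_biSup α B hx
    _ = ⨆ y ∈ B, α x y * hausdorffLift β B C := biSup_mul_distrib ..
    _ ≤ ⨆ y ∈ B, α x y * ⨆ z ∈ C, β y z := by
      gcongr with y hy
      exact hausdorffLift_le_biSup β C hy
    _ = ⨆ y ∈ B, ⨆ z ∈ C, α x y * β y z := by simp only [mul_biSup_distrib]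
    _ ≤ ⨆ z ∈ C, vcomp β α x z :=
      iSup₂_le fun y _ => iSup₂_mono fun z _ => mul_le_vcomp α β x y z

theorem vcomp_hausdorffLift_le [Semigroup V] [IsQuantale V] (α : X → Y → V) (β : Y → Z → V) :
    vcomp (hausdorffLift β) (hausdorffLift α) ≤ hausdorffLift (vcomp β α) :=
  fun A C => iSup_le fun B => hausdorffLift_mul_hausdorffLift_le α β A B C

end HausdorffLift

theorem hausdorff_vrelator_general
    {V : Type v} [CompleteLattice V] [Monoid V] [IsQuantale V] :
    (∀ (X : Type u) (A : Set X),
      (1 : V) ≤ hausdorffLift (vid (V := V) X) A A) ∧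
    (∀ {X Y Z : Type u} (α : X → Y → V) (β : Y → Z → V),
      vcomp (hausdorffLift β) (hausdorffLift α) ≤ hausdorffLift (vcomp β α)) ∧
    (∀ {X Y : Type u} (f : X → Y) (A : Set X),
      (1 : V) ≤ hausdorffLift (vgraph (V := V) f) A (f '' A) ∧
      (1 : V) ≤ hausdorffLift (vdual (vgraph (V := V) f)) (f '' A) A) ∧
    (∀ {X Y : Type u} (α β : X → Y → V), α ≤ β →
      hausdorffLift α ≤ hausdorffLift β) :=
  ⟨fun _ A => one_le_hausdorffLift_vid A,
    vcomp_hausdorffLift_le,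
    fun f A =>
      ⟨one_le_hausdorffLift_vgraph_image f A, one_le_hausdorffLift_vdual_vgraph_image f A⟩,
    fun _ _ => hausdorffLift_mono⟩

/-- the Hausdorff lifting is a `V`-relator for the powerset functor
(whose action on functions is `Set.image`). -/
theorem hausdorff_vrelator
    {V : Type v} [CompleteLattice V] [CommMonoid V] [IsQuantale V]
    (hint : (1 : V) = ⊤) :
    (∀ (X : Type u) (A : Set X),
      (1 : V) ≤ hausdorffLift (vid (V := V) X) A A) ∧
    (∀ {X Y Z : Type u} (α : X → Y → V) (β : Y → Z → V),
      vcomp (hausdorffLift β) (hausdorffLift α) ≤ hausdorffLift (vcomp β α)) ∧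
    (∀ {X Y : Type u} (f : X → Y) (A : Set X),
      (1 : V) ≤ hausdorffLift (vgraph (V := V) f) A (f '' A) ∧
      (1 : V) ≤ hausdorffLift (vdual (vgraph (V := V) f)) (f '' A) A) ∧
    (∀ {X Y : Type u} (α β : X → Y → V), α ≤ β →
      hausdorffLift α ≤ hausdorffLift β) :=
  hausdorff_vrelator_general
end

section
/- Let V be a commutative integral quantale. For a V-relation α : X ⇸ Y define α_⊥ : Option X ⇸ Option Y by α_⊥(some x, some y) = α(x, y), α_⊥(none, m) = k for every m ∈ Option Y, and α_⊥(some x, none) = ⊥. Then (−)_⊥ is a V-relator for the Option functor (whose action on a function f is Option.map f): (1) id_{Option X} ≤ (id_X)_⊥; (2) β_⊥ · α_⊥ ≤ (β · α)_⊥ for all α : X ⇸ Y, β : Y ⇸ Z; (3) Option.map f ≤ (graph f)_⊥ and (Option.map f)° ≤ ((graph f)°)_⊥ for every function f; (4) α ≤ β implies α_⊥ ≤ β_⊥. -/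
universe u v

/-- The partiality lifting of a `V`-relation `α : X ⇸ Y` to `Option X ⇸ Option Y`:
`α_⊥(some x, some y) = α x y`, `α_⊥(none, m) = k = 1`, `α_⊥(some x, none) = ⊥`. -/
def optVLift {V : Type v} [CompleteLattice V] [One V] {X Y : Type u}
    (α : X → Y → V) : Option X → Option Y → V
  | none, _ => 1
  | some x, some y => α x y
  | some _, none => ⊥

/-!
The graph of `f` lies below a `V`-relation `α` exactly when `1 ≤ α x (f x)` for all `x`, so the
identity and graph laws only concern the entries of the lifting at `(m, Option.map f m)` and at
its transpose, which are `1` for `m = none` and entries of the original relation otherwise. For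
composition, a path `m → n → p` that starts in `some` contributes `⊥` once it drops to `none`;
otherwise it either stays in `some`, or starts at `none`, where the bound `1` is the top
element by integrality.
-/

theorem vdual_le_iff {V : Type v} [LE V] {X Y : Type u} {α : X → Y → V} {β : Y → X → V} :
    vdual α ≤ β ↔ α ≤ vdual β :=
  forall_comm

section Relations

variable {V : Type v} [CompleteLattice V] {X Y Z : Type u}

theorem vgraph_le_iff [One V] {f : X → Y} {α : X → Y → V} :
    vgraph f ≤ α ↔ ∀ x, 1 ≤ α x (f x) := by
  refine ⟨fun h x => (if_pos rfl).ge.trans (h x (f x)), fun h x y => ?_⟩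
  unfold vgraph
  split_ifs with hy
  · exact hy ▸ h x
  · exact bot_le

open Classical in
theorem vid_eq_vgraph_id [One V] (X : Type u) : vid (V := V) X = vgraph id :=
  funext₂ fun _ _ => if_congr eq_comm rfl rfl

theorem vcomp_le_iff [Mul V] {α : X → Y → V} {β : Y → Z → V} {γ : X → Z → V} :
    vcomp β α ≤ γ ↔ ∀ x y z, α x y * β y z ≤ γ x z := by
  simp only [Pi.le_def, vcomp, iSup_le_iff]
  exact forall_congr' fun _ => forall_comm

end Relations

section PartialityLifting

variable {V : Type v} [CompleteLattice V] {X Y Z : Type u}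

theorem optVLift_mono [One V] {α β : X → Y → V} (h : α ≤ β) : optVLift α ≤ optVLift β
  | none, _ => le_rfl
  | some x, some y => h x y
  | some _, none => le_rfl

theorem vgraph_map_le_optVLift [One V] {f : X → Y} {α : X → Y → V} (h : vgraph f ≤ α) :
    vgraph (Option.map f) ≤ optVLift α :=
  vgraph_le_iff.mpr fun
    | none => le_rfl
    | some x => vgraph_le_iff.mp h x

theorem vdual_vgraph_map_le_optVLift [One V] {f : X → Y} {α : Y → X → V}
    (h : vdual (vgraph f) ≤ α) : vdual (vgraph (Option.map f)) ≤ optVLift α :=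
  vdual_le_iff.mpr <| vgraph_le_iff.mpr fun
    | none => le_rfl
    | some x => vgraph_le_iff.mp (vdual_le_iff.mp h) x

theorem vid_option_le_optVLift_vid [One V] (X : Type u) :
    vid (V := V) (Option X) ≤ optVLift (vid X) := by
  rw [vid_eq_vgraph_id, ← Option.map_id]
  exact vgraph_map_le_optVLift (vid_eq_vgraph_id X).ge

theorem vcomp_optVLift_le [Monoid V] [IsQuantale V] (hint : (1 : V) = ⊤)
    (α : X → Y → V) (β : Y → Z → V) :
    vcomp (optVLift β) (optVLift α) ≤ optVLift (vcomp β α) :=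
  vcomp_le_iff.mpr fun
    | none, _, _ => le_top.trans hint.ge
    | some _, none, _ => Quantale.bot_mul.trans_le bot_le
    | some _, some _, none => Quantale.mul_bot.le
    | some x, some y, some z => mul_le_vcomp α β x y z

end PartialityLifting

theorem optLift_vrelator_general
    {V : Type v} [CompleteLattice V] [Monoid V] [IsQuantale V]
    (hint : (1 : V) = ⊤) :
    (∀ X : Type u, vid (V := V) (Option X) ≤ optVLift (vid X)) ∧
    (∀ {X Y Z : Type u} (α : X → Y → V) (β : Y → Z → V),
      vcomp (optVLift β) (optVLift α) ≤ optVLift (vcomp β α)) ∧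
    (∀ {X Y : Type u} (f : X → Y),
      vgraph (V := V) (Option.map f) ≤ optVLift (vgraph f) ∧
      vdual (vgraph (V := V) (Option.map f)) ≤ optVLift (vdual (vgraph f))) ∧
    (∀ {X Y : Type u} (α β : X → Y → V), α ≤ β → optVLift α ≤ optVLift β) :=
  ⟨vid_option_le_optVLift_vid,
    vcomp_optVLift_le hint,
    fun _ => ⟨vgraph_map_le_optVLift le_rfl, vdual_vgraph_map_le_optVLift le_rfl⟩,
    fun _ _ => optVLift_mono⟩

/-- the partiality lifting `(−)_⊥` is a `V`-relator for the `Option`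
functor (whose action on functions is `Option.map`). -/
theorem optLift_vrelator
    {V : Type v} [CompleteLattice V] [CommMonoid V] [IsQuantale V]
    (hint : (1 : V) = ⊤) :
    (∀ X : Type u, vid (V := V) (Option X) ≤ optVLift (vid X)) ∧
    (∀ {X Y Z : Type u} (α : X → Y → V) (β : Y → Z → V),
      vcomp (optVLift β) (optVLift α) ≤ optVLift (vcomp β α)) ∧
    (∀ {X Y : Type u} (f : X → Y),
      vgraph (V := V) (Option.map f) ≤ optVLift (vgraph f) ∧
      vdual (vgraph (V := V) (Option.map f)) ≤ optVLift (vdual (vgraph f))) ∧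
    (∀ {X Y : Type u} (α β : X → Y → V), α ≤ β → optVLift α ≤ optVLift β) :=
  optLift_vrelator_general hint
end

section
/- For every real p with 0 < p < 1, the probabilistic choice operation x ⊕_p y := p·x + (1−p)·y makes the unit interval quantale a Σ-quantale: (1) ⊕_p is monotone with respect to the quantale order (i.e. monotone in each argument with respect to the usual order on [0,1]); (2) 0 ⊕_p 0 = 0 (the unit law k ≤ 0 ⊕_p 0); (3) for all a₁, a₂, b₁, b₂ ∈ [0,1], p·min(a₁ + b₁, 1) + (1−p)·min(a₂ + b₂, 1) ≤ min((p·a₁ + (1−p)·a₂) + (p·b₁ + (1−p)·b₂), 1) (the law op(a₁, a₂) ⊗ op(b₁, b₂) ≤ op(a₁ ⊗ b₁, a₂ ⊗ b₂) in the quantale order). -/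
/-!
Truncation `x ↦ min x c` is concave, being the minimum of two affine functions. The lax
distribution law is this concavity at the two points `a₁ + b₁` and `a₂ + b₂`.
-/

section ConvexCombination

variable {R E : Type*} [Semiring R] [PartialOrder R] [AddCommMonoid E] [Module R E]

theorem monotone_smul_fst_add_smul_snd [PartialOrder E] [IsOrderedAddMonoid E] [PosSMulMono R E]
    {p q : R} (hp : 0 ≤ p) (hq : 0 ≤ q) : Monotone fun x : E × E ↦ p • x.1 + q • x.2 :=
  (monotone_fst.const_smul hp).add (monotone_snd.const_smul hq)

variable [LinearOrder E] [IsOrderedAddMonoid E] [PosSMulStrictMono R E]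

variable (R) in
theorem concaveOn_min_const (c : E) : ConcaveOn R Set.univ fun x : E ↦ min x c :=
  (concaveOn_id convex_univ).inf (concaveOn_const c convex_univ)

theorem smul_min_add_smul_min_le_min {p q : R} (hp : 0 ≤ p) (hq : 0 ≤ q) (hpq : p + q = 1)
    (a₁ a₂ b₁ b₂ c : E) :
    p • min (a₁ + b₁) c + q • min (a₂ + b₂) c ≤
      min ((p • a₁ + q • a₂) + (p • b₁ + q • b₂)) c :=
  calc
    p • min (a₁ + b₁) c + q • min (a₂ + b₂) c
      ≤ min (p • (a₁ + b₁) + q • (a₂ + b₂)) c :=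
        (concaveOn_min_const R c).2 (Set.mem_univ _) (Set.mem_univ _) hp hq hpq
    _ = min ((p • a₁ + q • a₂) + (p • b₁ + q • b₂)) c := by
        rw [smul_add, smul_add, add_add_add_comm]

theorem prob_choice_sigma_quantale_general {p q : R} (hp : 0 ≤ p) (hq : 0 ≤ q) (hpq : p + q = 1)
    (c : E) :
    (Monotone fun x : E × E ↦ p • x.1 + q • x.2) ∧
    p • (0 : E) + q • (0 : E) = 0 ∧
    ∀ a₁ a₂ b₁ b₂ : E,
      p • min (a₁ + b₁) c + q • min (a₂ + b₂) c ≤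
        min ((p • a₁ + q • a₂) + (p • b₁ + q • b₂)) c :=
  ⟨monotone_smul_fst_add_smul_snd hp hq, Convex.combo_self hpq 0,
    fun a₁ a₂ b₁ b₂ ↦ smul_min_add_smul_min_le_min hp hq hpq a₁ a₂ b₁ b₂ c⟩

end ConvexCombination

/-- for `0 < p < 1`, probabilistic choice `x ⊕_p y = p·x + (1−p)·y` is a
Σ-quantale operation on the unit interval quantale (`[0,1]` with the reversed order,
truncated addition as multiplication and `0` as unit): it is monotone in each argument
(with respect to the usual order on `[0,1]`), satisfies the unit law `0 ⊕_p 0 = 0`, and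
the lax distribution law over truncated addition. -/
theorem prob_choice_sigma_quantale (p : ℝ) (hp : 0 < p) (hp1 : p < 1) :
    (∀ a a' b b' : ℝ, a ∈ Set.Icc (0 : ℝ) 1 → a' ∈ Set.Icc (0 : ℝ) 1 →
      b ∈ Set.Icc (0 : ℝ) 1 → b' ∈ Set.Icc (0 : ℝ) 1 →
      a ≤ a' → b ≤ b' → p * a + (1 - p) * b ≤ p * a' + (1 - p) * b') ∧
    (p * 0 + (1 - p) * 0 = 0) ∧
    (∀ a₁ a₂ b₁ b₂ : ℝ, a₁ ∈ Set.Icc (0 : ℝ) 1 → a₂ ∈ Set.Icc (0 : ℝ) 1 →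
      b₁ ∈ Set.Icc (0 : ℝ) 1 → b₂ ∈ Set.Icc (0 : ℝ) 1 →
      p * min (a₁ + b₁) 1 + (1 - p) * min (a₂ + b₂) 1 ≤
        min ((p * a₁ + (1 - p) * a₂) + (p * b₁ + (1 - p) * b₂)) 1) := by
  obtain ⟨mono, unit, lax⟩ := prob_choice_sigma_quantale_general hp.le (sub_nonneg.2 hp1.le)
    (add_sub_cancel p 1) (1 : ℝ)
  exact ⟨fun _ _ _ _ _ _ _ _ ha hb ↦ mono (Prod.mk_le_mk.2 ⟨ha, hb⟩), unit,
    fun a₁ a₂ b₁ b₂ _ _ _ _ ↦ lax a₁ a₂ b₁ b₂⟩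
end
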